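/- Let A ∈ {0,1}^{n×n} be a random symmetric adjacency matrix with zero diagonal such that A_{uv} ~ Bernoulli(P_{uv}) independently for all u > v, where P ∈ [0,1]^{n×n} is symmetric, and set p_max = max over u ≥ v of P_{uv} and d = e·(n·p_max + 1). For any C' > 0 there exists C > 0 such that for any τ > 0, with probability at least 1 − n^{−C'}, there exists a subset J ⊆ [n] satisfying n − |J| ≤ n/d and ‖(L(A_τ) − L(P_τ))_{J×J}‖ ≤ C·(√(d·log d)·(d + τ)/τ² + √d/τ), where for a matrix M, M_{J×J} denotes the matrix that agrees with M on entries indexed by J×J and is zero elsewhere. -/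

import Mathlib

open scoped BigOperators
open Filter

namespace SBM

noncomputable section

/-- Adjacency matrices of graphs on `n` nodes. -/
abbrev Adj (n : ℕ) := Fin n → Fin n → Bool

/-- 0/1 real value of an entry of the adjacency matrix. -/
def aVal {n : ℕ} (A : Adj n) (u v : Fin n) : ℝ := if A u v then 1 else 0

/-- Probability weight of one adjacency matrix under the SBM with edge
probability matrix `P`: the entries above the diagonal are independent
Bernoulli, the matrix is symmetric with zero diagonal. -/
def weight {n : ℕ} (P : Matrix (Fin n) (Fin n) ℝ) (A : Adj n) : ℝ :=
  if (∀ u, A u u = false) ∧ (∀ u v, A u v = A v u) then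
    ∏ u : Fin n, ∏ v : Fin n,
      if u < v then (if A u v then P u v else 1 - P u v) else 1
  else 0

/-- Probability of a set of adjacency matrices under the SBM with edge
probability matrix `P`. -/
def prob {n : ℕ} (P : Matrix (Fin n) (Fin n) ℝ) (S : Set (Adj n)) : ℝ :=
  ∑ A : Adj n, S.indicator (weight P) A

/-- The edge probability matrix `P u v = B (σ u) (σ v)`. -/
def pMat {n k : ℕ} (B : Matrix (Fin k) (Fin k) ℝ) (σ : Fin n → Fin k) :
    Matrix (Fin n) (Fin n) ℝ := fun u v => B (σ u) (σ v)

/-- Size of the `i`-th community of a label assignment. -/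
def comSize {n k : ℕ} (σ : Fin n → Fin k) (i : Fin k) : ℝ :=
  ((Finset.univ.filter fun u => σ u = i).card : ℝ)

/-- Hamming loss `ℓ0`. -/
def l0 {n k : ℕ} (σ1 σ2 : Fin n → Fin k) : ℝ :=
  ((Finset.univ.filter fun u => σ1 u ≠ σ2 u).card : ℝ) / n

/-- Misclassification proportion: minimum of `ℓ0` over relabelings. -/
def misclass {n k : ℕ} (σh σ : Fin n → Fin k) : ℝ :=
  ⨅ π : Equiv.Perm (Fin k), l0 σh (fun u => π (σ u))

/-- Euclidean norm of a vector. -/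
def sqnorm {n : ℕ} (x : Fin n → ℝ) : ℝ := Real.sqrt (∑ i, x i ^ 2)

/-- Operator (spectral) norm of a square matrix. -/
def opNorm {n : ℕ} (M : Matrix (Fin n) (Fin n) ℝ) : ℝ :=
  sSup { t : ℝ | ∃ x : Fin n → ℝ, sqnorm x = 1 ∧ t = sqnorm (M.mulVec x) }

/-- The `k`-th largest singular value of a square matrix, via the
Courant–Fischer max-min characterization. -/
def kthSingular {n : ℕ} (M : Matrix (Fin n) (Fin n) ℝ) (k : ℕ) : ℝ :=
  sSup { t : ℝ | 0 ≤ t ∧ ∃ V : Submodule ℝ (Fin n → ℝ),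
    Module.finrank ℝ V = k ∧ ∀ x ∈ V, t * sqnorm x ≤ sqnorm (M.mulVec x) }

/-- The Rényi divergence of order 1/2, `I*`. -/
def renyiHalf (n : ℕ) (a b : ℝ) : ℝ :=
  -2 * Real.log (Real.sqrt ((a / n) * (b / n)) +
    Real.sqrt ((1 - a / n) * (1 - b / n)))

/-- The balanced parameter space `Θ₀(n,k,a,b,β)`. -/
def Theta0 (n k : ℕ) (a b β : ℝ) :
    Set (Matrix (Fin k) (Fin k) ℝ × (Fin n → Fin k)) :=
  { p | (∀ i, (n : ℝ) / (β * k) - 1 ≤ comSize p.2 i ∧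
          comSize p.2 i ≤ β * n / k + 1) ∧
        (∀ i, p.1 i i = a / n) ∧ ∀ i j, i ≠ j → p.1 i j = b / n }

/-- Average of the off-diagonal entries of a `k × k` matrix. -/
def offDiagAvg {k : ℕ} (B : Matrix (Fin k) (Fin k) ℝ) : ℝ :=
  (1 / ((k : ℝ) * ((k : ℝ) - 1))) *
    ∑ i : Fin k, ∑ j : Fin k, if i ≠ j then B i j else 0

/-- The general parameter space `Θ(n,k,a,b,λ,β;α)`. -/
def ThetaGen (n k : ℕ) (a b lam β α : ℝ) :
    Set (Matrix (Fin k) (Fin k) ℝ × (Fin n → Fin k)) :=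
  { p | (∀ i, (n : ℝ) / (β * k) - 1 ≤ comSize p.2 i ∧
          comSize p.2 i ≤ β * n / k + 1) ∧
        (∀ i j, p.1 i j = p.1 j i) ∧
        (∀ i j, 0 ≤ p.1 i j ∧ p.1 i j ≤ 1) ∧
        b / (α * n) ≤ offDiagAvg p.1 ∧
        (∀ i j, i ≠ j → p.1 i j ≤ b / n) ∧
        (∃ i j, i ≠ j ∧ p.1 i j = b / n) ∧
        (∀ i, a / n ≤ p.1 i i) ∧ (∃ i, p.1 i i = a / n) ∧
        (∀ i, p.1 i i ≤ α * a / n) ∧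
        lam ≤ kthSingular (pMat p.1 p.2) k }

/-- The estimated community `C̃ᵢᵘ` (node `u` itself is excluded). -/
def cluster {n k : ℕ} (u : Fin n) (s : Fin n → Fin k) (i : Fin k) :
    Finset (Fin n) :=
  Finset.univ.filter fun v => v ≠ u ∧ s v = i

/-- Number of edges within a set of nodes. -/
def edgesWithin {n : ℕ} (A : Adj n) (C : Finset (Fin n)) : ℝ :=
  (∑ v ∈ C, ∑ w ∈ C, aVal A v w) / 2

/-- Number of edges between two disjoint sets of nodes. -/
def edgesBetween {n : ℕ} (A : Adj n) (C D : Finset (Fin n)) : ℝ :=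
  ∑ v ∈ C, ∑ w ∈ D, aVal A v w

/-- The connectivity estimates `B̂ᵢⱼᵘ` of Algorithm 1, based on the initial
assignment `s = σ⁰ᵤ`. -/
def hatB {n k : ℕ} (A : Adj n) (u : Fin n) (s : Fin n → Fin k) (i j : Fin k) :
    ℝ :=
  if i = j then
    edgesWithin A (cluster u s i) /
      (((cluster u s i).card : ℝ) * (((cluster u s i).card : ℝ) - 1) / 2)
  else
    edgesBetween A (cluster u s i) (cluster u s j) /
      (((cluster u s i).card : ℝ) * ((cluster u s j).card : ℝ))

/-- `â_u = n · minᵢ B̂ᵢᵢᵘ`. -/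
def hata {n k : ℕ} (A : Adj n) (u : Fin n) (s : Fin n → Fin k) : ℝ :=
  n * ⨅ i : Fin k, hatB A u s i i

/-- `b̂_u = n · maxᵢ≠ⱼ B̂ᵢⱼᵘ`. -/
def hatb {n k : ℕ} (A : Adj n) (u : Fin n) (s : Fin n → Fin k) : ℝ :=
  n * sSup { x : ℝ | ∃ i j : Fin k, i ≠ j ∧ x = hatB A u s i j }

/-- `t = ½ log (â (1 − b̂/n) / (b̂ (1 − â/n)))`. -/
def tStat (n : ℕ) (ha hb : ℝ) : ℝ :=
  Real.log (ha * (1 - hb / n) / (hb * (1 - ha / n))) / 2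

/-- `ρ = −(1/(2t)) log (((â/n)e^{−t} + 1 − â/n)/((b̂/n)e^{t} + 1 − b̂/n))`. -/
def rhoStat (n : ℕ) (ha hb t : ℝ) : ℝ :=
  -(Real.log (((ha / n) * Real.exp (-t) + 1 - ha / n) /
      ((hb / n) * Real.exp t + 1 - hb / n))) / (2 * t)

/-- Penalized vote of node `u` for label `l`. -/
def vote {n k : ℕ} (A : Adj n) (u : Fin n) (s : Fin n → Fin k) (ρ : ℝ)
    (l : Fin k) : ℝ :=
  (∑ v ∈ cluster u s l, aVal A u v) - ρ * ((cluster u s l).card : ℝ)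

/-- `lbl` maximizes the penalized vote of node `u`. -/
def VoteMax {n k : ℕ} (A : Adj n) (u : Fin n) (s : Fin n → Fin k) (ρ : ℝ)
    (lbl : Fin k) : Prop :=
  ∀ l : Fin k, vote A u s ρ l ≤ vote A u s ρ lbl

/-- `|{v : σU_{u1}(v) = l} ∩ {v : σU_u(v) = σU_u(u)}|`. -/
def consensusCount {n k : ℕ} (σU : Fin n → Fin n → Fin k) (u1 u : Fin n)
    (l : Fin k) : ℕ :=
  (Finset.univ.filter fun v => σU u1 v = l ∧ σU u v = σU u u).card

/-- Specification of the refinement-plus-consensus scheme of Algorithm 1, with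
an arbitrary family of penalties `ρ`.  `σ0 u` is the initial assignment
`σ⁰ᵤ`, `σU u` is the refined assignment `σ̂ᵤ`, `σhat` is the final output. -/
def RefineSpec {n k : ℕ} (A : Adj n) (σ0 σU : Fin n → Fin n → Fin k)
    (ρ : Fin n → ℝ) (σhat : Fin n → Fin k) : Prop :=
  (∀ u v, v ≠ u → σU u v = σ0 u v) ∧
  (∀ u, VoteMax A u (σ0 u) (ρ u) (σU u u)) ∧
  ∀ hn : 0 < n,
    σhat ⟨0, hn⟩ = σU ⟨0, hn⟩ ⟨0, hn⟩ ∧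
    ∀ u, u ≠ ⟨0, hn⟩ →
      ∀ l : Fin k, consensusCount σU ⟨0, hn⟩ u l ≤
        consensusCount σU ⟨0, hn⟩ u (σhat u)

/-- Algorithm 1 with the standard data-driven penalties. -/
def AlgorithmOne {n k : ℕ} (A : Adj n) (σ0 σU : Fin n → Fin n → Fin k)
    (σhat : Fin n → Fin k) : Prop :=
  RefineSpec A σ0 σU
    (fun u => rhoStat n (hata A u (σ0 u)) (hatb A u (σ0 u))
      (tStat n (hata A u (σ0 u)) (hatb A u (σ0 u)))) σhat

/-- Algorithm 1 with the truncated `t_u` (truncation level `log (2/ε0)`). -/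
def AlgorithmOneTrunc (ε0 : ℝ) {n k : ℕ} (A : Adj n)
    (σ0 σU : Fin n → Fin n → Fin k) (σhat : Fin n → Fin k) : Prop :=
  RefineSpec A σ0 σU
    (fun u => rhoStat n (hata A u (σ0 u)) (hatb A u (σ0 u))
      (min (tStat n (hata A u (σ0 u)) (hatb A u (σ0 u)))
        (Real.log (2 / ε0)))) σhat

/-- Algorithm 1 with known `a` and `b`. -/
def AlgorithmOneKnown (a b : ℝ) {n k : ℕ} (A : Adj n)
    (σ0 σU : Fin n → Fin n → Fin k) (σhat : Fin n → Fin k) : Prop :=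
  RefineSpec A σ0 σU (fun _ => rhoStat n a b (tStat n a b)) σhat

/-- Algorithm 1 with known `a`, `b` and truncated `t_u`. -/
def AlgorithmOneKnownTrunc (a b ε0 : ℝ) {n k : ℕ} (A : Adj n)
    (σ0 σU : Fin n → Fin n → Fin k) (σhat : Fin n → Fin k) : Prop :=
  RefineSpec A σ0 σU
    (fun _ => rhoStat n a b (min (tStat n a b) (Real.log (2 / ε0)))) σhat

/-- The initializer `σ0 A u` (that is, `σ⁰ᵤ`) only uses the data `A₋ᵤ`. -/
def LocalInit {n k : ℕ} (σ0 : Adj n → Fin n → Fin n → Fin k) : Prop :=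
  ∀ (A A' : Adj n) (u : Fin n),
    (∀ v w, v ≠ u → w ≠ u → A v w = A' v w) → σ0 A u = σ0 A' u

/-- Condition 1: the initializer is, with probability at least
`1 − C0 n^{−(1+δ)}`, within misclassification proportion `γ` of the truth,
uniformly over the parameter space and the left-out node. -/
def Condition1 {n k : ℕ}
    (Θ : Set (Matrix (Fin k) (Fin k) ℝ × (Fin n → Fin k)))
    (σ0 : Adj n → Fin n → Fin n → Fin k) (C0 δ γ : ℝ) : Prop :=
  ∀ p ∈ Θ, ∀ u : Fin n,
    1 - C0 * (n : ℝ) ^ (-(1 + δ)) ≤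
      prob (pMat p.1 p.2) { A | misclass p.2 (σ0 A u) ≤ γ }

/-- Degree of a node. -/
def degree {n : ℕ} (A : Adj n) (u : Fin n) : ℝ := ∑ v, aVal A u v

/-- Average degree `d̄`. -/
def avgDeg {n : ℕ} (A : Adj n) : ℝ := (∑ u, degree A u) / n

/-- Trimming operator `T_τ`: zero out rows/columns of high-degree nodes. -/
def trim {n : ℕ} (A : Adj n) (τ : ℝ) : Matrix (Fin n) (Fin n) ℝ :=
  fun u v => if τ ≤ degree A u ∨ τ ≤ degree A v then 0 else aVal A u v

/-- Regularized adjacency matrix `A_τ = A + (τ/n)·11ᵀ`. -/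
def addReg {n : ℕ} (A : Adj n) (τ : ℝ) : Matrix (Fin n) (Fin n) ℝ :=
  fun u v => aVal A u v + τ / n

/-- Normalized Laplacian `L(M)_{uv} = M_{uv}/√(r_u r_v)`. -/
def lap {n : ℕ} (M : Matrix (Fin n) (Fin n) ℝ) : Matrix (Fin n) (Fin n) ℝ :=
  fun u v => M u v / Real.sqrt ((∑ w, M u w) * (∑ w, M v w))

/-- `U` is a matrix whose columns are orthonormal eigenvectors of `M`
corresponding to the `k` leading (largest in absolute value) eigenvalues. -/
def LeadingEigenvectors {n k : ℕ} (M : Matrix (Fin n) (Fin n) ℝ)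
    (U : Matrix (Fin n) (Fin k) ℝ) : Prop :=
  ∃ μ : Fin k → ℝ,
    (∀ i j : Fin k, (∑ u, U u i * U u j) = if i = j then (1 : ℝ) else 0) ∧
    (∀ j : Fin k, M.mulVec (fun u => U u j) = fun u => μ j * U u j) ∧
    ∀ (x : Fin n → ℝ) (c : ℝ), M.mulVec x = (fun u => c * x u) →
      (∀ j, (∑ u, x u * U u j) = 0) → x ≠ 0 → ∀ j, |c| ≤ |μ j|

/-- Distance between two rows of `U`. -/
def rowDist {n k : ℕ} (U : Matrix (Fin n) (Fin k) ℝ) (v w : Fin n) : ℝ :=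
  Real.sqrt (∑ j, (U v j - U w j) ^ 2)

/-- Number of points of `S` within distance `r` of `v`. -/
def ballCount {n k : ℕ} (U : Matrix (Fin n) (Fin k) ℝ) (r : ℝ)
    (S : Finset (Fin n)) (v : Fin n) : ℕ :=
  (S.filter fun w => rowDist U w v < r).card

/-- Specification of the greedy clustering scheme (Algorithm 2) with critical
radius `r`, applied to the rows of `U`. -/
def GreedyCluster {n k : ℕ} (U : Matrix (Fin n) (Fin k) ℝ) (r : ℝ)
    (σhat : Fin n → Fin k) : Prop :=
  ∃ (S : ℕ → Finset (Fin n)) (t : Fin k → Fin n) (Ch : Fin k → Finset (Fin n)),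
    S 0 = Finset.univ ∧
    (∀ i : Fin k,
      ((S i.val).Nonempty → t i ∈ S i.val ∧
        ∀ v ∈ S i.val,
          ballCount U r (S i.val) v ≤ ballCount U r (S i.val) (t i)) ∧
      Ch i = (S i.val).filter (fun v => rowDist U v (t i) < r) ∧
      S (i.val + 1) = S i.val \ Ch i) ∧
    (∀ i : Fin k, ∀ u ∈ Ch i, σhat u = i) ∧
    ∀ u ∈ S k, ∀ j : Fin k,
      (∑ v ∈ Ch (σhat u), rowDist U u v) / ((Ch (σhat u)).card : ℝ) ≤
        (∑ v ∈ Ch j, rowDist U u v) / ((Ch j).card : ℝ)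

/-- `σhat` is a possible output of `USC(τ)` (with tuning constant `μ`). -/
def USCOutput {n k : ℕ} (A : Adj n) (τ μ : ℝ) (σhat : Fin n → Fin k) : Prop :=
  ∃ U : Matrix (Fin n) (Fin k) ℝ,
    LeadingEigenvectors (trim A τ) U ∧
    GreedyCluster U (μ * Real.sqrt ((k : ℝ) / n)) σhat

/-- `σhat` is a possible output of `NSC(τ)` (with tuning constant `μ`). -/
def NSCOutput {n k : ℕ} (A : Adj n) (τ μ : ℝ) (σhat : Fin n → Fin k) : Prop :=
  ∃ U : Matrix (Fin n) (Fin k) ℝ,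
    LeadingEigenvectors (lap (addReg A τ)) U ∧
    GreedyCluster U (μ * Real.sqrt ((k : ℝ) / n)) σhat

/-- The initializer `σ0 A u` is obtained by applying `USC(Cτ · d̄)` to the
leave-one-out matrix `A₋ᵤ` (identified with a graph on `n − 1` nodes via an
injection `e` avoiding `u`). -/
def USCInitDeg {n k : ℕ} (Cτ μ : ℝ) (σ0 : Adj n → Fin n → Fin n → Fin k) :
    Prop :=
  ∀ (A : Adj n) (u : Fin n), ∃ (m : ℕ) (e : Fin m → Fin n) (s' : Fin m → Fin k),
    m + 1 = n ∧ Function.Injective e ∧ (∀ w, e w ≠ u) ∧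
    USCOutput (fun v w => A (e v) (e w))
      (Cτ * avgDeg (fun v w => A (e v) (e w))) μ s' ∧
    ∀ w, σ0 A u (e w) = s' w

/-- The initializer `σ0 A u` is obtained by applying `NSC(Cτ · d̄)` to `A₋ᵤ`. -/
def NSCInitDeg {n k : ℕ} (Cτ μ : ℝ) (σ0 : Adj n → Fin n → Fin n → Fin k) :
    Prop :=
  ∀ (A : Adj n) (u : Fin n), ∃ (m : ℕ) (e : Fin m → Fin n) (s' : Fin m → Fin k),
    m + 1 = n ∧ Function.Injective e ∧ (∀ w, e w ≠ u) ∧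
    NSCOutput (fun v w => A (e v) (e w))
      (Cτ * avgDeg (fun v w => A (e v) (e w))) μ s' ∧
    ∀ w, σ0 A u (e w) = s' w

/-- The initializer `σ0 A u` is obtained by applying `USC(τ)` (with a fixed
regularization level `τ`) to `A₋ᵤ`. -/
def USCInitTau {n k : ℕ} (τ μ : ℝ) (σ0 : Adj n → Fin n → Fin n → Fin k) :
    Prop :=
  ∀ (A : Adj n) (u : Fin n), ∃ (m : ℕ) (e : Fin m → Fin n) (s' : Fin m → Fin k),
    m + 1 = n ∧ Function.Injective e ∧ (∀ w, e w ≠ u) ∧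
    USCOutput (fun v w => A (e v) (e w)) τ μ s' ∧
    ∀ w, σ0 A u (e w) = s' w

/-- The initializer `σ0 A u` is obtained by applying `NSC(τ)` (with a fixed
regularization level `τ`) to `A₋ᵤ`. -/
def NSCInitTau {n k : ℕ} (τ μ : ℝ) (σ0 : Adj n → Fin n → Fin n → Fin k) :
    Prop :=
  ∀ (A : Adj n) (u : Fin n), ∃ (m : ℕ) (e : Fin m → Fin n) (s' : Fin m → Fin k),
    m + 1 = n ∧ Function.Injective e ∧ (∀ w, e w ≠ u) ∧
    NSCOutput (fun v w => A (e v) (e w)) τ μ s' ∧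
    ∀ w, σ0 A u (e w) = s' w

/-- The minimax-rate threshold `exp(−(1−coef)·n·I*/2)` for `k = 2` and
`exp(−(1−coef)·n·I*/(βk))` for `k ≥ 3`. -/
def rate (β : ℝ) (n k : ℕ) (a b coef : ℝ) : ℝ :=
  if k = 2 then Real.exp (-((1 - coef) * ((n : ℝ) * renyiHalf n a b)) / 2)
  else Real.exp (-((1 - coef) * ((n : ℝ) * renyiHalf n a b)) / (β * k))

/-- `sup_{(B,σ)∈Θ₀} P{ℓ(σ,σ̂) ≥ rate} → 0` as `n → ∞`. -/
def SupSmall0 (β : ℝ) (k : ℕ → ℕ) (a b coef : ℕ → ℝ)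
    (σhat : ∀ n, Adj n → Fin n → Fin (k n)) : Prop :=
  ∀ ε' : ℝ, 0 < ε' → ∀ᶠ n in atTop,
    ∀ p ∈ Theta0 n (k n) (a n) (b n) β,
      prob (pMat p.1 p.2)
        { A | rate β n (k n) (a n) (b n) (coef n) ≤ misclass (σhat n A) p.2 }
        ≤ ε'

/-- `sup_{(B,σ)∈Θ} P{ℓ(σ,σ̂) ≥ rate} → 0` as `n → ∞`. -/
def SupSmallGen (β α : ℝ) (k : ℕ → ℕ) (a b lam coef : ℕ → ℝ)
    (σhat : ∀ n, Adj n → Fin n → Fin (k n)) : Prop :=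
  ∀ ε' : ℝ, 0 < ε' → ∀ᶠ n in atTop,
    ∀ p ∈ ThetaGen n (k n) (a n) (b n) (lam n) β α,
      prob (pMat p.1 p.2)
        { A | rate β n (k n) (a n) (b n) (coef n) ≤ misclass (σhat n A) p.2 }
        ≤ ε'

/-- The running assumption `0 < b < a ≤ (1−ε) n`. -/
def Baseline (ε : ℝ) (n : ℕ) (a b : ℝ) : Prop :=
  0 < b ∧ b < a ∧ a ≤ (1 - ε) * n

/-- `a ≍ b`. -/
def Comparable (a b : ℕ → ℝ) : Prop :=
  ∃ c1 c2 : ℝ, 0 < c1 ∧ ∀ n, c1 * b n ≤ a n ∧ a n ≤ c2 * b n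

/-- The constant `C_ε`. -/
def Ceps (ε : ℝ) : ℝ := (10 / 3) * ((2 - ε) / ((ε / 2) * Real.log (2 / ε)))

/-- The constant `c_ε`. -/
def ceps (ε : ℝ) : ℝ := min (1 / (10 * Ceps ε)) (ε / (2 - ε))

/-- The maximal entry `p_max` of a matrix. -/
def pmax {n : ℕ} (P : Matrix (Fin n) (Fin n) ℝ) : ℝ :=
  sSup { x : ℝ | ∃ u v, x = P u v }

/-- The matrix agreeing with `M` on `J × J` and zero elsewhere. -/
def restrictM {n : ℕ} (M : Matrix (Fin n) (Fin n) ℝ) (J : Finset (Fin n)) :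
    Matrix (Fin n) (Fin n) ℝ :=
  fun u v => if u ∈ J ∧ v ∈ J then M u v else 0

/-- The real-valued adjacency matrix. -/
def adjMat {n : ℕ} (A : Adj n) : Matrix (Fin n) (Fin n) ℝ := fun u v => aVal A u v

end

end SBM

namespace SBM

open Filter

/-!
The set `J` consists of the nodes whose degree is within a multiple of `√(d log d)` of its mean.
With probability at least `1 - n ^ (-C')`, Chernoff bounds and a union bound over rectangles show
that every rectangle sum of `A - P` is small and that no set of more than `n / (2 d)` nodes has
an atypical total degree; the latter leaves at most `n / d` nodes outside `J`.

On `J` the norm of `A - P` is `O(√(d log d))`: expand both test vectors in binary digits, so that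
the bilinear form becomes a weighted sum of rectangle sums over pairs of dyadic levels. Pairs of
levels further than a factor `√d` apart are controlled by the row sums of `|A - P|`. In the
remaining window there are `O(log d)` levels for each given one, and Cauchy–Schwarz over the window
costs the factor `√(log d)`.

Finally, with `D_M` the diagonal matrix of inverse square roots of the row sums of `M`, we have
`L (M) = D_M M D_M`, and `L (A_τ) - L (P_τ)` is the sum of `D_{A_τ} (A - P) D_{A_τ}` and
`D_{A_τ} P_τ D_{A_τ} - D_{P_τ} P_τ D_{P_τ}`. All row sums are at least `τ`, so the first term gains
a factor `1 / τ`; the entries of the second are bounded through the differences of the row sums,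
which are small on `J`.
-/

section RandomGraph

variable {n : ℕ} {P : Matrix (Fin n) (Fin n) ℝ} {q θ : ℝ}

/-- The pairs of nodes above the diagonal; they index the independent entries of an adjacency
matrix. -/
abbrev UpperPair (n : ℕ) := {p : Fin n × Fin n // p.1 < p.2}

/-- The support of `weight P`: symmetric adjacency matrices with zero diagonal. -/
def IsSimple (A : Adj n) : Prop := (∀ u, A u u = false) ∧ ∀ u v, A u v = A v u

/-- The simple graph with prescribed adjacency above the diagonal, inverse to restriction to
`UpperPair n`. -/
def adjOfUpper (g : UpperPair n → Bool) : Adj n := fun u v =>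
  if h : u < v then g ⟨(u, v), h⟩ else if h : v < u then g ⟨(v, u), h⟩ else false

lemma adjOfUpper_apply (g : UpperPair n → Bool) (p : UpperPair n) :
    adjOfUpper g p.1.1 p.1.2 = g p := by
  simp [adjOfUpper, p.2]

lemma isSimple_adjOfUpper (g : UpperPair n → Bool) : IsSimple (adjOfUpper g) := by
  refine ⟨fun u => by simp [adjOfUpper], fun u v => ?_⟩
  rcases lt_trichotomy u v with h | rfl | h
  · simp [adjOfUpper, h, h.not_gt]
  · rfl
  · simp [adjOfUpper, h, h.not_gt]

lemma IsSimple.adjOfUpper_eq {A : Adj n} (hA : IsSimple A) :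
    adjOfUpper (fun p => A p.1.1 p.1.2) = A := by
  funext u v
  rcases lt_trichotomy u v with h | rfl | h
  · simp [adjOfUpper, h]
  · simp [adjOfUpper, hA.1]
  · simp [adjOfUpper, h, h.not_gt, hA.2 u v]

lemma IsSimple.weight_eq_prod {A : Adj n} (hA : IsSimple A) :
    weight P A =
      ∏ p : UpperPair n, if A p.1.1 p.1.2 then P p.1.1 p.1.2 else 1 - P p.1.1 p.1.2 := by
  rw [weight, if_pos ⟨hA.1, hA.2⟩, ← Finset.prod_product', Finset.univ_product_univ,
    ← Finset.prod_filter]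
  exact Finset.prod_subtype _ (by simp)
    (fun p : Fin n × Fin n => if A p.1 p.2 then P p.1 p.2 else 1 - P p.1 p.2)

lemma weight_eq_zero_of_not_isSimple {A : Adj n} (hA : ¬ IsSimple A) : weight P A = 0 :=
  if_neg hA

lemma sum_weight_mul (F : Adj n → ℝ) :
    ∑ A, weight P A * F A =
      ∑ g : UpperPair n → Bool, weight P (adjOfUpper g) * F (adjOfUpper g) := by
  classical
  have hsupp : ∑ A with IsSimple A, weight P A * F A = ∑ A, weight P A * F A :=
    Finset.sum_subset (Finset.subset_univ _) fun A _ hA => by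
      rw [weight_eq_zero_of_not_isSimple (by simpa using hA), zero_mul]
  rw [← hsupp]
  refine Finset.sum_bij' (fun A _ p => A p.1.1 p.1.2) (fun g _ => adjOfUpper g)
    (fun _ _ => Finset.mem_univ _) (fun g _ => by simpa using isSimple_adjOfUpper g)
    (fun A hA => (Finset.mem_filter.1 hA).2.adjOfUpper_eq)
    (fun g _ => funext (adjOfUpper_apply g)) (fun A hA => ?_)
  rw [(Finset.mem_filter.1 hA).2.adjOfUpper_eq]

lemma sum_weight_mul_prod (P : Matrix (Fin n) (Fin n) ℝ) (f : UpperPair n → Bool → ℝ) :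
    ∑ A : Adj n, weight P A * ∏ p : UpperPair n, f p (A p.1.1 p.1.2) =
      ∏ p : UpperPair n, (P p.1.1 p.1.2 * f p true + (1 - P p.1.1 p.1.2) * f p false) := by
  classical
  have hfactor (p : UpperPair n) :
      P p.1.1 p.1.2 * f p true + (1 - P p.1.1 p.1.2) * f p false =
        ∑ b : Bool, (if b then P p.1.1 p.1.2 else 1 - P p.1.1 p.1.2) * f p b := by
    simp
  simp only [sum_weight_mul, hfactor, Finset.prod_univ_sum, Fintype.piFinset_univ]
  refine Finset.sum_congr rfl fun g _ => ?_
  simp only [(isSimple_adjOfUpper g).weight_eq_prod, adjOfUpper_apply, Finset.prod_mul_distrib]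

lemma sum_weight (P : Matrix (Fin n) (Fin n) ℝ) : ∑ A : Adj n, weight P A = 1 := by
  simpa using sum_weight_mul_prod P (fun _ _ => 1)

lemma weight_nonneg (hP : ∀ u v, 0 ≤ P u v ∧ P u v ≤ 1) (A : Adj n) : 0 ≤ weight P A := by
  by_cases hA : IsSimple A
  · rw [hA.weight_eq_prod]
    refine Finset.prod_nonneg fun p _ => ?_
    have := hP p.1.1 p.1.2
    split_ifs <;> linarith
  · rw [weight_eq_zero_of_not_isSimple hA]

lemma prob_mono_of_isSimple (hP : ∀ u v, 0 ≤ P u v ∧ P u v ≤ 1) {S T : Set (Adj n)}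
    (h : ∀ A, IsSimple A → A ∈ S → A ∈ T) : prob P S ≤ prob P T := by
  refine Finset.sum_le_sum fun A _ => ?_
  have hT : 0 ≤ T.indicator (weight P) A := Set.indicator_nonneg (fun A _ => weight_nonneg hP A) A
  refine Set.indicator_apply_le' (fun hS => ?_) fun _ => hT
  by_cases hA : IsSimple A
  · exact (Set.indicator_of_mem (h A hA hS) _).ge
  · exact (weight_eq_zero_of_not_isSimple hA).trans_le hT

lemma prob_mono (hP : ∀ u v, 0 ≤ P u v ∧ P u v ≤ 1) {S T : Set (Adj n)} (h : S ⊆ T) :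
    prob P S ≤ prob P T :=
  prob_mono_of_isSimple hP fun _ _ hA => h hA

lemma prob_union_le (hP : ∀ u v, 0 ≤ P u v ∧ P u v ≤ 1) (S T : Set (Adj n)) :
    prob P (S ∪ T) ≤ prob P S + prob P T := by
  simp only [prob, ← Finset.sum_add_distrib]
  refine Finset.sum_le_sum fun A _ => ?_
  have := weight_nonneg hP A
  by_cases hS : A ∈ S <;> by_cases hT : A ∈ T <;> simp [hS, hT, this]

lemma prob_exists_le (hP : ∀ u v, 0 ≤ P u v ∧ P u v ≤ 1) {ι : Type*} (s : Finset ι)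
    (Q : ι → Adj n → Prop) :
    prob P {A | ∃ i ∈ s, Q i A} ≤ ∑ i ∈ s, prob P {A | Q i A} := by
  classical
  induction s using Finset.induction_on with
  | empty => simp [prob]
  | insert a s ha ih =>
    have hsplit : {A : Adj n | ∃ i ∈ insert a s, Q i A} = {A | Q a A} ∪ {A | ∃ i ∈ s, Q i A} := by
      ext A; simp
    rw [Finset.sum_insert ha, hsplit]
    exact (prob_union_le hP _ _).trans (by gcongr)

lemma one_sub_prob_le_prob {S T : Set (Adj n)} (hP : ∀ u v, 0 ≤ P u v ∧ P u v ≤ 1)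
    (h : Tᶜ ⊆ S) : 1 - prob P S ≤ prob P T := by
  have htotal : prob P (S ∪ T) = 1 := by
    have huniv : S ∪ T = Set.univ :=
      Set.eq_univ_of_forall fun A => or_iff_not_imp_right.2 fun hA => h hA
    simp [prob, huniv, sum_weight]
  linarith [prob_union_le hP S T]

lemma exp_sub_one_sub_le (b : ℝ) : Real.exp b - 1 - b ≤ b ^ 2 * Real.exp |b| := by
  have hle : Real.exp b - 1 ≤ b * Real.exp b := by
    have h := mul_le_mul_of_nonneg_right (Real.add_one_le_exp (-b)) (Real.exp_pos b).le
    rw [← Real.exp_add, neg_add_cancel, Real.exp_zero] at h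
    linarith
  have hmono : Real.exp b ≤ Real.exp |b| := Real.exp_le_exp.2 (le_abs_self b)
  rcases le_total 0 b with hb | hb
  · nlinarith
  · have hone : 1 ≤ Real.exp |b| := Real.one_le_exp (abs_nonneg b)
    nlinarith [sq_nonneg b, Real.add_one_le_exp b, Real.exp_le_one_iff.2 hb]

lemma bernoulli_mgf_le {p b β : ℝ} (hp : 0 ≤ p) (hb : |b| ≤ β) :
    p * Real.exp (b * (1 - p)) + (1 - p) * Real.exp (b * (0 - p)) ≤
      Real.exp (p * (b ^ 2 * Real.exp β)) := by
  calc p * Real.exp (b * (1 - p)) + (1 - p) * Real.exp (b * (0 - p))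
      = (p * (Real.exp b - 1) + 1) * Real.exp (-(b * p)) := by
        rw [show b * (1 - p) = b + -(b * p) by ring, Real.exp_add,
          show b * (0 - p) = -(b * p) by ring]
        ring
    _ ≤ Real.exp (p * (Real.exp b - 1)) * Real.exp (-(b * p)) :=
        mul_le_mul_of_nonneg_right (Real.add_one_le_exp _) (Real.exp_pos _).le
    _ = Real.exp (p * (Real.exp b - 1 - b)) := by rw [← Real.exp_add]; ring_nf
    _ ≤ Real.exp (p * (b ^ 2 * Real.exp β)) := by
        have := (exp_sub_one_sub_le b).trans
          (mul_le_mul_of_nonneg_left (Real.exp_le_exp.2 hb) (sq_nonneg b))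
        gcongr

lemma sum_sum_eq_sum_upper_add_diag (F : Fin n → Fin n → ℝ) :
    ∑ u, ∑ v, F u v =
      ∑ p : UpperPair n, (F p.1.1 p.1.2 + F p.1.2 p.1.1) + ∑ u, F u u := by
  have hupper (G : Fin n → Fin n → ℝ) :
      ∑ p : UpperPair n, G p.1.1 p.1.2 = ∑ u, ∑ v, if u < v then G u v else 0 := by
    rw [← Finset.sum_product', Finset.univ_product_univ, ← Finset.sum_filter]
    exact (Finset.sum_subtype _ (by simp) fun p : Fin n × Fin n => G p.1 p.2).symm
  have hdiag : ∑ u, F u u = ∑ u, ∑ v, if u = v then F u v else 0 := by simp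
  have hlower : (∑ u, ∑ v, if u < v then F v u else 0) = ∑ u, ∑ v, if v < u then F u v else 0 :=
    Finset.sum_comm
  rw [Finset.sum_add_distrib, hupper F, hupper (fun u v => F v u), hlower, hdiag]
  simp only [← Finset.sum_add_distrib]
  refine Finset.sum_congr rfl fun u _ => Finset.sum_congr rfl fun v _ => ?_
  rcases lt_trichotomy u v with h | rfl | h
  · simp [h, h.not_gt, h.ne]
  · simp
  · simp [h, h.not_gt, h.ne']

/-- The off-diagonal part of `A - P`. The diagonal of `P` is not the expectation of that of `A`,
so it is left out. -/
noncomputable def centered (P : Matrix (Fin n) (Fin n) ℝ) (A : Adj n) :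
    Matrix (Fin n) (Fin n) ℝ :=
  fun u v => if u = v then 0 else aVal A u v - P u v

lemma IsSimple.sum_mul_centered {A : Adj n} (hA : IsSimple A) (hsymm : ∀ u v, P u v = P v u)
    (c : Fin n → Fin n → ℝ) :
    ∑ u, ∑ v, c u v * centered P A u v =
      ∑ p : UpperPair n, (c p.1.1 p.1.2 + c p.1.2 p.1.1) *
        ((if A p.1.1 p.1.2 then 1 else 0) - P p.1.1 p.1.2) := by
  rw [sum_sum_eq_sum_upper_add_diag]
  simp only [centered, if_true, mul_zero, Finset.sum_const_zero, add_zero]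
  refine Finset.sum_congr rfl fun p _ => ?_
  rw [if_neg p.2.ne, if_neg p.2.ne', aVal, aVal, hA.2 p.1.2, hsymm p.1.2]
  ring

lemma upperPair_mgf_le {p x y : ℝ} (hp : 0 ≤ p) (hpq : p ≤ q) (hθ : 0 ≤ θ) (hx : |x| ≤ 1)
    (hy : |y| ≤ 1) :
    p * Real.exp (θ * ((x + y) * (1 - p))) + (1 - p) * Real.exp (θ * ((x + y) * (0 - p))) ≤
      Real.exp (2 * θ ^ 2 * Real.exp (2 * θ) * q * (|x| + |y|)) := by
  have hxy : |x + y| ≤ |x| + |y| := abs_add_le x y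
  have hb : |θ * (x + y)| ≤ 2 * θ := by
    rw [abs_mul, abs_of_nonneg hθ]
    nlinarith
  have hsq : (x + y) ^ 2 ≤ 2 * (|x| + |y|) := by
    rw [← sq_abs]
    nlinarith [abs_nonneg (x + y)]
  have hq : 0 ≤ q := hp.trans hpq
  rw [← mul_assoc θ, ← mul_assoc θ]
  refine (bernoulli_mgf_le hp hb).trans (Real.exp_le_exp.2 ?_)
  calc p * ((θ * (x + y)) ^ 2 * Real.exp (2 * θ))
      = θ ^ 2 * Real.exp (2 * θ) * (p * (x + y) ^ 2) := by ring
    _ ≤ θ ^ 2 * Real.exp (2 * θ) * (q * (2 * (|x| + |y|))) := by gcongr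
    _ = 2 * θ ^ 2 * Real.exp (2 * θ) * q * (|x| + |y|) := by ring

lemma sum_weight_mul_exp_le (hsymm : ∀ u v, P u v = P v u) (hP : ∀ u v, 0 ≤ P u v ∧ P u v ≤ 1)
    (hq : ∀ u v, P u v ≤ q) (hθ : 0 ≤ θ) {c : Fin n → Fin n → ℝ} (hc : ∀ u v, |c u v| ≤ 1) :
    ∑ A : Adj n, weight P A * Real.exp (θ * ∑ u, ∑ v, c u v * centered P A u v) ≤
      Real.exp (2 * θ ^ 2 * Real.exp (2 * θ) * q * ∑ u, ∑ v, |c u v|) := by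
  let f (p : UpperPair n) (b : Bool) : ℝ := Real.exp (θ *
    ((c p.1.1 p.1.2 + c p.1.2 p.1.1) * ((if b then 1 else 0) - P p.1.1 p.1.2)))
  have hfactor (A : Adj n) :
      weight P A * Real.exp (θ * ∑ u, ∑ v, c u v * centered P A u v) =
        weight P A * ∏ p : UpperPair n, f p (A p.1.1 p.1.2) := by
    by_cases hA : IsSimple A
    · rw [hA.sum_mul_centered hsymm, Finset.mul_sum, Real.exp_sum]
    · simp only [weight_eq_zero_of_not_isSimple hA, zero_mul]
  have hdiag : 0 ≤ q * ∑ u, |c u u| := by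
    rw [Finset.mul_sum]
    exact Finset.sum_nonneg fun u _ =>
      mul_nonneg ((hP u u).1.trans (hq u u)) (abs_nonneg _)
  rw [Finset.sum_congr rfl fun A _ => hfactor A, sum_weight_mul_prod]
  calc ∏ p : UpperPair n, (P p.1.1 p.1.2 * f p true + (1 - P p.1.1 p.1.2) * f p false)
      ≤ ∏ p : UpperPair n, Real.exp (2 * θ ^ 2 * Real.exp (2 * θ) * q *
          (|c p.1.1 p.1.2| + |c p.1.2 p.1.1|)) := by
        refine Finset.prod_le_prod (fun p _ => ?_) fun p _ => ?_
        · have h0 := (hP p.1.1 p.1.2).1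
          have h1 := sub_nonneg.2 (hP p.1.1 p.1.2).2
          positivity
        · simpa [f] using upperPair_mgf_le (hP p.1.1 p.1.2).1 (hq _ _) hθ (hc _ _) (hc _ _)
    _ = Real.exp (2 * θ ^ 2 * Real.exp (2 * θ) * q *
          ∑ p : UpperPair n, (|c p.1.1 p.1.2| + |c p.1.2 p.1.1|)) := by
        rw [Finset.mul_sum, Real.exp_sum]
    _ ≤ Real.exp (2 * θ ^ 2 * Real.exp (2 * θ) * q * ∑ u, ∑ v, |c u v|) := by
        rw [sum_sum_eq_sum_upper_add_diag fun u v => |c u v|, mul_add]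
        have : 0 ≤ 2 * θ ^ 2 * Real.exp (2 * θ) * (q * ∑ u, |c u u|) := by positivity
        exact Real.exp_le_exp.2 (by linarith)

lemma prob_linearForm_ge_le (hsymm : ∀ u v, P u v = P v u)
    (hP : ∀ u v, 0 ≤ P u v ∧ P u v ≤ 1) (hq : ∀ u v, P u v ≤ q) (hθ : 0 ≤ θ)
    {c : Fin n → Fin n → ℝ} (hc : ∀ u v, |c u v| ≤ 1) (lam : ℝ) :
    prob P {A | lam ≤ ∑ u, ∑ v, c u v * centered P A u v} ≤
      Real.exp (-(θ * lam) + 2 * θ ^ 2 * Real.exp (2 * θ) * q * ∑ u, ∑ v, |c u v|) := by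
  rw [Real.exp_add]
  refine le_trans ?_ (mul_le_mul_of_nonneg_left
    (sum_weight_mul_exp_le hsymm hP hq hθ hc) (Real.exp_pos _).le)
  rw [Finset.mul_sum]
  refine Finset.sum_le_sum fun A _ => ?_
  have hw := weight_nonneg hP A
  rw [mul_left_comm, ← Real.exp_add]
  by_cases h : lam ≤ ∑ u, ∑ v, c u v * centered P A u v
  · rw [Set.indicator_of_mem (by exact h)]
    refine le_mul_of_one_le_right hw (Real.one_le_exp ?_)
    linarith [mul_le_mul_of_nonneg_left h hθ]
  · rw [Set.indicator_of_notMem (by exact h)]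
    positivity

lemma prob_abs_linearForm_ge_le (hsymm : ∀ u v, P u v = P v u)
    (hP : ∀ u v, 0 ≤ P u v ∧ P u v ≤ 1) (hq : ∀ u v, P u v ≤ q) (hθ : 0 ≤ θ)
    {c : Fin n → Fin n → ℝ} (hc : ∀ u v, |c u v| ≤ 1) (lam : ℝ) :
    prob P {A | lam ≤ |∑ u, ∑ v, c u v * centered P A u v|} ≤
      2 * Real.exp (-(θ * lam) + 2 * θ ^ 2 * Real.exp (2 * θ) * q * ∑ u, ∑ v, |c u v|) := by
  have hsplit : {A | lam ≤ |∑ u, ∑ v, c u v * centered P A u v|} ⊆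
      {A | lam ≤ ∑ u, ∑ v, c u v * centered P A u v} ∪
        {A | lam ≤ ∑ u, ∑ v, -c u v * centered P A u v} := by
    intro A hA
    simpa only [Set.mem_union, Set.mem_ofPred_eq, neg_mul, Finset.sum_neg_distrib, ← le_abs]
      using hA
  have hpos := prob_linearForm_ge_le hsymm hP hq hθ hc lam
  have hneg := prob_linearForm_ge_le hsymm hP hq hθ (c := fun u v => -c u v)
    (by simpa using hc) lam
  simp only [abs_neg] at hneg
  linarith [(prob_mono hP hsplit).trans (prob_union_le hP _ _)]

end RandomGraph

section Discrepancy

/-- The sum of the entries of `B` over the rectangle `S ×ˢ T`. -/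
def rectSum {ι κ : Type*} (B : Matrix ι κ ℝ) (S : Finset ι) (T : Finset κ) : ℝ :=
  ∑ u ∈ S, ∑ v ∈ T, B u v

lemma rectSum_eq_sum_ite {ι κ : Type*} [Fintype ι] [Fintype κ] [DecidableEq ι] [DecidableEq κ]
    (B : Matrix ι κ ℝ) (S : Finset ι) (T : Finset κ) :
    rectSum B S T = ∑ u, ∑ v, (if u ∈ S ∧ v ∈ T then 1 else 0) * B u v := by
  simp only [rectSum, ite_and, ite_mul, one_mul, zero_mul, Finset.sum_ite_irrel,
    Finset.sum_const_zero, Finset.sum_ite_mem, Finset.univ_inter]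

lemma exists_chernoff_param {a lam μ b : ℝ} (ha : 0 ≤ a) (hlam : 0 ≤ lam) (hμ : 0 ≤ μ)
    (hlinear : b ≤ a * lam / 2) (hquad : 8 * Real.exp (2 * a) * μ * b ≤ lam ^ 2) :
    ∃ θ : ℝ, 0 ≤ θ ∧ -(θ * lam) + 2 * θ ^ 2 * Real.exp (2 * θ) * μ ≤ -b := by
  have hsmall {θ : ℝ} (hθ : 0 ≤ θ) (hθa : θ ≤ a) (hθμ : 4 * Real.exp (2 * a) * μ * θ ≤ lam) :
      -(θ * lam) + 2 * θ ^ 2 * Real.exp (2 * θ) * μ ≤ -(θ * lam / 2) := by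
    have hexp : 2 * θ ^ 2 * Real.exp (2 * θ) * μ ≤ 2 * θ ^ 2 * Real.exp (2 * a) * μ := by gcongr
    linarith [mul_le_mul_of_nonneg_left hθμ hθ]
  rcases le_or_gt (4 * Real.exp (2 * a) * μ * a) lam with hcase | hcase
  · exact ⟨a, ha, (hsmall ha le_rfl hcase).trans (by linarith)⟩
  · have hμ' : 0 < 4 * Real.exp (2 * a) * μ := by
      by_contra! h
      linarith [mul_nonpos_of_nonpos_of_nonneg h ha]
    refine ⟨lam / (4 * Real.exp (2 * a) * μ), by positivity,
      (hsmall (by positivity) ?_ (mul_div_cancel₀ _ hμ'.ne').le).trans (neg_le_neg ?_)⟩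
    · rw [div_le_iff₀ hμ']
      linarith
    · rw [div_mul_eq_mul_div, div_div, le_div_iff₀ (by positivity)]
      linarith

lemma prob_rectSum_ge_le {n : ℕ} {P : Matrix (Fin n) (Fin n) ℝ} {q a lam b : ℝ}
    (hsymm : ∀ u v, P u v = P v u) (hP : ∀ u v, 0 ≤ P u v ∧ P u v ≤ 1) (hq : ∀ u v, P u v ≤ q)
    (S T : Finset (Fin n)) (ha : 0 ≤ a) (hlam : 0 ≤ lam) (hlinear : b ≤ a * lam / 2)
    (hquad : 8 * Real.exp (2 * a) * (q * (S.card * T.card)) * b ≤ lam ^ 2) :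
    prob P {A | lam ≤ |rectSum (centered P A) S T|} ≤ 2 * Real.exp (-b) := by
  have hμ : 0 ≤ q * (S.card * T.card) :=
    calc (0 : ℝ) ≤ ∑ _u ∈ S, ∑ _v ∈ T, q :=
          Finset.sum_nonneg fun u _ => Finset.sum_nonneg fun v _ => (hP u v).1.trans (hq u v)
      _ = q * (S.card * T.card) := by simp; ring
  obtain ⟨θ, hθ, hle⟩ := exists_chernoff_param ha hlam hμ hlinear hquad
  have htail := prob_abs_linearForm_ge_le hsymm hP hq hθ
    (c := fun u v => if u ∈ S ∧ v ∈ T then 1 else 0) (by intro u v; split_ifs <;> simp) lam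
  have hmass : ∑ u, ∑ v, |if u ∈ S ∧ v ∈ T then (1 : ℝ) else 0| = S.card * T.card := by
    have := rectSum_eq_sum_ite (Matrix.of fun _ _ => (1 : ℝ)) S T
    simp only [rectSum, Matrix.of_apply, Finset.sum_const, nsmul_eq_mul, mul_one] at this
    rw [this]
    refine Finset.sum_congr rfl fun u _ => Finset.sum_congr rfl fun v _ => ?_
    split_ifs <;> simp
  simp only [← rectSum_eq_sum_ite, hmass, mul_assoc _ q] at htail
  exact htail.trans (by gcongr)

/-- The quantity `s log (e n / s)`, which bounds the logarithm of the number of `s`-subsets of an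
`n`-set. -/
noncomputable def subsetEntropy (n s : ℝ) : ℝ := s * (1 + Real.log (n / s))

lemma choose_le_exp_subsetEntropy {n s : ℕ} (hs : 0 < s) (hsn : s ≤ n) :
    (n.choose s : ℝ) ≤ Real.exp (subsetEntropy n s) := by
  have hs' : (0 : ℝ) < s := by exact_mod_cast hs
  have hn' : (0 : ℝ) < n := by exact_mod_cast hs.trans_le hsn
  calc (n.choose s : ℝ) ≤ (n : ℝ) ^ s / (s.factorial : ℝ) := Nat.choose_le_pow_div s n
    _ = ((s : ℝ) ^ s / (s.factorial : ℝ)) * ((n : ℝ) / s) ^ s := by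
        rw [div_pow]; field_simp
    _ ≤ Real.exp s * ((n : ℝ) / s) ^ s := by
        gcongr
        exact Real.pow_div_factorial_le_exp (s : ℝ) hs'.le s
    _ = Real.exp (subsetEntropy n s) := by
        rw [subsetEntropy, mul_add, mul_one, Real.exp_add, Real.exp_nat_mul,
          Real.exp_log (by positivity)]

lemma subsetEntropy_mono {n s t : ℝ} (hs : 0 < s) (hst : s ≤ t) (htn : t ≤ n) :
    subsetEntropy n s ≤ subsetEntropy n t := by
  have ht : 0 < t := hs.trans_le hst
  have hn : 0 < n := ht.trans_le htn
  have hdiff : s * (Real.log t - Real.log s) ≤ t - s := by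
    rw [← Real.log_div ht.ne' hs.ne']
    calc s * Real.log (t / s) ≤ s * (t / s - 1) := by
          gcongr
          exact Real.log_le_sub_one_of_pos (by positivity)
      _ = t - s := by field_simp
  have hlog : Real.log t ≤ Real.log n := Real.log_le_log ht htn
  rw [subsetEntropy, subsetEntropy, Real.log_div hn.ne' hs.ne', Real.log_div hn.ne' ht.ne']
  nlinarith

lemma sum_exp_neg_subsetEntropy_le {n : ℕ} {c : ℝ} (hc : 1 ≤ c) :
    ∑ S : Finset (Fin n) with S.Nonempty, Real.exp (-(c * subsetEntropy n S.card)) ≤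
      n * Real.exp (-((c - 1) * (1 + Real.log n))) := by
  let f (s : ℕ) : ℝ := if s = 0 then 0 else Real.exp (-(c * subsetEntropy n s))
  have hcard : ∑ S : Finset (Fin n) with S.Nonempty, Real.exp (-(c * subsetEntropy n S.card)) =
      ∑ S ∈ (Finset.univ : Finset (Fin n)).powerset, f S.card := by
    rw [Finset.sum_filter, Finset.powerset_univ]
    refine Finset.sum_congr rfl fun S _ => ?_
    rcases S.eq_empty_or_nonempty with rfl | hS
    · simp [f]
    · simp [f, hS, hS.ne_empty]
  have hlayer (k : ℕ) (hk : k < n) :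
      n.choose (k + 1) • f (k + 1) ≤ Real.exp (-((c - 1) * (1 + Real.log n))) := by
    have hone : 1 + Real.log n ≤ subsetEntropy n (k + 1 : ℕ) := by
      simpa [subsetEntropy] using subsetEntropy_mono (n := n) (t := (k + 1 : ℕ)) one_pos
        (by simp) (by exact_mod_cast hk)
    simp only [f, if_neg k.succ_ne_zero, nsmul_eq_mul]
    calc (n.choose (k + 1) : ℝ) * Real.exp (-(c * subsetEntropy n (k + 1 : ℕ)))
        ≤ Real.exp (subsetEntropy n (k + 1 : ℕ)) *
            Real.exp (-(c * subsetEntropy n (k + 1 : ℕ))) := by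
          gcongr
          exact choose_le_exp_subsetEntropy k.succ_pos hk
      _ = Real.exp (-((c - 1) * subsetEntropy n (k + 1 : ℕ))) := by
          rw [← Real.exp_add]; ring_nf
      _ ≤ Real.exp (-((c - 1) * (1 + Real.log n))) := by
          have := sub_nonneg.2 hc
          gcongr
  rw [hcard, Finset.sum_powerset_apply_card, Finset.card_univ, Fintype.card_fin,
    Finset.sum_range_succ']
  calc ∑ k ∈ Finset.range n, n.choose (k + 1) • f (k + 1) + n.choose 0 • f 0
      = ∑ k ∈ Finset.range n, n.choose (k + 1) • f (k + 1) := by simp [f]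
    _ ≤ ∑ _k ∈ Finset.range n, Real.exp (-((c - 1) * (1 + Real.log n))) :=
        Finset.sum_le_sum fun k hk => hlayer k (Finset.mem_range.1 hk)
    _ = n * Real.exp (-((c - 1) * (1 + Real.log n))) := by simp

lemma sum_exp_neg_subsetEntropy_le_rpow {n : ℕ} {C' : ℝ} (hC' : 0 ≤ C') :
    ∑ S : Finset (Fin n) with S.Nonempty, Real.exp (-((C' + 4) * subsetEntropy n S.card)) ≤
      (n : ℝ) ^ (-C') * (1 / 4) := by
  rcases n.eq_zero_or_pos with rfl | hn
  · simp only [Finset.eq_empty_of_isEmpty, Finset.not_nonempty_empty, Finset.filter_false,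
      Finset.sum_empty]
    positivity
  · have hn' : (0 : ℝ) < n := by exact_mod_cast hn
    have hlog : 0 ≤ Real.log n := Real.log_natCast_nonneg n
    have hquarter : Real.exp (-2) ≤ 1 / 4 := by
      have := Real.add_one_le_exp (1 : ℝ)
      rw [Real.exp_neg, inv_eq_one_div, show (2 : ℝ) = 1 + 1 by norm_num, Real.exp_add]
      exact one_div_le_one_div_of_le (by norm_num) (by nlinarith)
    refine (sum_exp_neg_subsetEntropy_le (by linarith)).trans ?_
    calc (n : ℝ) * Real.exp (-((C' + 4 - 1) * (1 + Real.log n)))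
        = Real.exp (Real.log n + -((C' + 4 - 1) * (1 + Real.log n))) := by
          rw [Real.exp_add, Real.exp_log hn']
      _ ≤ Real.exp (Real.log n * -C' + -2) := Real.exp_le_exp.2 (by nlinarith)
      _ ≤ (n : ℝ) ^ (-C') * (1 / 4) := by
          rw [Real.exp_add, Real.rpow_def_of_pos hn']
          gcongr

lemma exp_mul_one_add_log_le {y : ℝ} (hy : 0 < y) :
    Real.exp ((1 + Real.log y) / 4) * (1 + Real.log y) ≤ 8 * √y := by
  have hlog : 1 + Real.log y ≤ 4 * Real.exp ((1 + Real.log y) / 4) := by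
    linarith [Real.add_one_le_exp ((1 + Real.log y) / 4)]
  have hhalf : Real.exp (1 / 2) ≤ 2 := by
    rw [← abs_of_pos (Real.exp_pos _), ← sq_le_sq₀ (abs_nonneg _) zero_le_two, sq_abs,
      ← Real.exp_nat_mul]
    norm_num
    linarith [Real.exp_one_lt_d9]
  calc Real.exp ((1 + Real.log y) / 4) * (1 + Real.log y)
      ≤ Real.exp ((1 + Real.log y) / 4) * (4 * Real.exp ((1 + Real.log y) / 4)) := by gcongr
    _ = 4 * Real.exp (1 / 2) * √y := by
        rw [Real.sqrt_eq_rpow, Real.rpow_def_of_pos hy, mul_assoc 4, ← Real.exp_add,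
          mul_left_comm, ← Real.exp_add]
        ring_nf
    _ ≤ 8 * √y := by
        gcongr
        linarith

/-- The discrepancy allowed on an `s × t` rectangle of an `n × n` matrix of average degree `d`. The
factor `(s / n) ^ (1 / 4) + (t / n) ^ (1 / 4)`, written with square roots, replaces the usual
logarithm of `n / s` and makes the sum over dyadic levels converge. -/
noncomputable def discBound (n d K s t : ℝ) : ℝ :=
  K * (√(d * s * t) * (√√(s / n) + √√(t / n)) + (s + t))

lemma discBound_nonneg {n d K s t : ℝ} (hK : 0 ≤ K) (hs : 0 ≤ s) (ht : 0 ≤ t) :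
    0 ≤ discBound n d K s t := by
  unfold discBound; positivity

lemma max_le_discBound {n d K s t : ℝ} (hK : 0 ≤ K) (hs : 0 ≤ s) (ht : 0 ≤ t) :
    K * (√(d * s * t) * √√(max s t / n) + max s t) ≤ discBound n d K s t := by
  rcases le_total s t with h | h
  · rw [max_eq_right h, discBound]
    gcongr
    · exact le_add_of_nonneg_left (Real.sqrt_nonneg _)
    · exact le_add_of_nonneg_left hs
  · rw [max_eq_left h, discBound]
    gcongr
    · exact le_add_of_nonneg_right (Real.sqrt_nonneg _)
    · exact le_add_of_nonneg_right ht

variable {n : ℕ} {P : Matrix (Fin n) (Fin n) ℝ} {d C : ℝ}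

lemma chernoff_quad_discBound {n m s t d C lam : ℝ} (hn : 0 < n) (hm : 0 < m) (hd : 0 ≤ d)
    (hs : 0 ≤ s) (ht : 0 ≤ t) (hC : 1 ≤ C)
    (hlam : 16 * C * (√(d * s * t) * √√(m / n)) ≤ lam) :
    8 * Real.exp ((1 + Real.log (n / m)) / 4) * (d / n * (s * t)) * (C * subsetEntropy n m) ≤
      lam ^ 2 := by
  have hroot : m / n * √(n / m) = √(m / n) := by
    rw [Real.sqrt_div hn.le, Real.sqrt_div hm.le]
    field_simp
    rw [Real.sq_sqrt hm.le, Real.sq_sqrt hn.le, mul_comm]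
  calc 8 * Real.exp ((1 + Real.log (n / m)) / 4) * (d / n * (s * t)) * (C * subsetEntropy n m)
      = 8 * C * (d * s * t) * (m / n) *
          (Real.exp ((1 + Real.log (n / m)) / 4) * (1 + Real.log (n / m))) := by
        rw [subsetEntropy]; ring
    _ ≤ 8 * C * (d * s * t) * (m / n) * (8 * √(n / m)) := by
        refine mul_le_mul_of_nonneg_left ?_ (by positivity)
        exact exp_mul_one_add_log_le (by positivity)
    _ = 64 * C * (d * s * t * √(m / n)) := by rw [← hroot]; ring
    _ ≤ (16 * C) ^ 2 * (d * s * t * √(m / n)) := by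
        gcongr
        nlinarith
    _ = (16 * C * (√(d * s * t) * √√(m / n))) ^ 2 := by
        rw [mul_pow (16 * C), mul_pow √_, Real.sq_sqrt (by positivity),
          Real.sq_sqrt (by positivity)]
    _ ≤ lam ^ 2 := by gcongr

lemma prob_discBound_le_rectSum_le (hsymm : ∀ u v, P u v = P v u)
    (hP : ∀ u v, 0 ≤ P u v ∧ P u v ≤ 1) (hd : 0 ≤ d) (hq : ∀ u v, P u v ≤ d / n) (hC : 1 ≤ C)
    {S T : Finset (Fin n)} (hS : S.Nonempty) (hT : T.Nonempty) :
    prob P {A | discBound n d (32 * C) S.card T.card ≤ |rectSum (centered P A) S T|} ≤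
      2 * (Real.exp (-(C * subsetEntropy n S.card)) *
        Real.exp (-(C * subsetEntropy n T.card))) := by
  have hs : (0 : ℝ) < S.card := by exact_mod_cast hS.card_pos
  have ht : (0 : ℝ) < T.card := by exact_mod_cast hT.card_pos
  have hmn : max (S.card : ℝ) T.card ≤ n :=
    max_le (by exact_mod_cast card_finset_fin_le S) (by exact_mod_cast card_finset_fin_le T)
  have hlam := max_le_discBound (n := n) (d := d) (K := 32 * C) (by positivity) hs.le ht.le
  have hEs := subsetEntropy_mono hs (le_max_left (S.card : ℝ) T.card) hmn
  have hEt := subsetEntropy_mono ht (le_max_right (S.card : ℝ) T.card) hmn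
  set lam := discBound n d (32 * C) S.card T.card
  set m : ℝ := max (S.card : ℝ) T.card
  have hm : 0 < m := lt_max_of_lt_left hs
  have hlog : 0 ≤ Real.log (n / m) := Real.log_nonneg ((one_le_div hm).2 hmn)
  have hlam_linear : 32 * C * m ≤ lam := by
    refine le_trans ?_ hlam
    gcongr
    exact le_add_of_nonneg_left (by positivity)
  have hlam_sqrt : 16 * (2 * C) * (√(d * S.card * T.card) * √√(m / n)) ≤ lam := by
    refine le_trans ?_ hlam
    rw [show 16 * (2 * C) = 32 * C by ring]
    gcongr
    exact le_add_of_nonneg_right hm.le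
  refine (prob_rectSum_ge_le hsymm hP hq S T (a := (1 + Real.log (n / m)) / 8)
    (b := 2 * C * subsetEntropy n m) (by positivity)
    (le_trans (by positivity) hlam_linear) ?_ ?_).trans ?_
  · rw [subsetEntropy]
    nlinarith [mul_le_mul_of_nonneg_left hlam_linear (by positivity : 0 ≤ 1 + Real.log (n / m))]
  · rw [show 2 * ((1 + Real.log (n / m)) / 8) = (1 + Real.log (n / m)) / 4 by ring]
    exact chernoff_quad_discBound (hm.trans_le hmn) hm hd hs.le ht.le (by linarith) hlam_sqrt
  · rw [← Real.exp_add]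
    gcongr
    nlinarith

lemma subsetEntropy_le_of_lt {n s d : ℝ} (hd : Real.exp 1 ≤ d) (hn : 0 < n)
    (hs : n / (2 * d) < s) : subsetEntropy n s ≤ 3 * (s * Real.log d) := by
  have hd0 : 0 < d := (Real.exp_pos 1).trans_le hd
  have hs0 : 0 < s := lt_trans (by positivity) hs
  have hlogd : 1 ≤ Real.log d := (Real.le_log_iff_exp_le hd0).2 hd
  have hratio : n / s ≤ 2 * d := by
    rw [div_lt_iff₀ (by positivity)] at hs
    rw [div_le_iff₀ hs0]
    linarith
  have hlog := Real.log_le_log (by positivity) hratio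
  rw [Real.log_mul two_ne_zero hd0.ne'] at hlog
  rw [subsetEntropy, mul_left_comm]
  exact mul_le_mul_of_nonneg_left (by linarith [Real.log_two_lt_d9]) hs0.le

lemma log_le_sqrt_mul_log {d : ℝ} (hd : Real.exp 1 ≤ d) : Real.log d ≤ √(d * Real.log d) := by
  have hd0 : 0 < d := (Real.exp_pos 1).trans_le hd
  have hlog : 0 ≤ Real.log d := Real.log_nonneg (Real.one_le_exp zero_le_one |>.trans hd)
  refine Real.le_sqrt_of_sq_le ?_
  nlinarith [Real.log_le_sub_one_of_pos hd0]

lemma prob_rectSum_univ_ge_le (hsymm : ∀ u v, P u v = P v u)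
    (hP : ∀ u v, 0 ≤ P u v ∧ P u v ≤ 1) (hd : Real.exp 1 ≤ d) (hq : ∀ u v, P u v ≤ d / n)
    (hC : 1 ≤ C) {S : Finset (Fin n)} (hS : n / (2 * d) < S.card) :
    prob P {A | S.card * (16 * C * √(d * Real.log d)) ≤
        |rectSum (centered P A) S Finset.univ|} ≤
      2 * Real.exp (-(C * subsetEntropy n S.card)) := by
  have hd0 : 0 < d := (Real.exp_pos 1).trans_le hd
  have hs : (0 : ℝ) < S.card := lt_of_le_of_lt (by positivity) hS
  have hn : (0 : ℝ) < n := hs.trans_le (by exact_mod_cast card_finset_fin_le S)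
  have hlog : 0 ≤ Real.log d := Real.log_nonneg (Real.one_le_exp zero_le_one |>.trans hd)
  refine (prob_rectSum_ge_le hsymm hP hq S Finset.univ (a := 1)
    (b := C * (3 * (S.card * Real.log d))) zero_le_one (by positivity) ?_ ?_).trans ?_
  · have : C * S.card * Real.log d ≤ C * S.card * √(d * Real.log d) := by
      gcongr
      exact log_le_sqrt_mul_log hd
    have : 0 ≤ C * S.card * √(d * Real.log d) := by positivity
    linarith
  · have hexp : Real.exp (2 * 1) ≤ 8 := by
      rw [show (2 * 1 : ℝ) = 1 + 1 by norm_num, Real.exp_add]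
      nlinarith [Real.exp_one_lt_d9, Real.exp_pos 1]
    calc 8 * Real.exp (2 * 1) * (d / n * (S.card * (Finset.univ : Finset (Fin n)).card)) *
          (C * (3 * (S.card * Real.log d)))
        = 24 * Real.exp (2 * 1) * C * (S.card ^ 2 * (d * Real.log d)) := by
          rw [Finset.card_univ, Fintype.card_fin]
          field_simp
          ring
      _ ≤ (16 * C) ^ 2 * (S.card ^ 2 * (d * Real.log d)) := by
          gcongr
          nlinarith
      _ = (S.card * (16 * C * √(d * Real.log d))) ^ 2 := by
          rw [mul_pow (S.card : ℝ), mul_pow (16 * C) √_, Real.sq_sqrt (by positivity)]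
          ring
  · gcongr
    exact subsetEntropy_le_of_lt hd hn hS

/-- The high-probability properties of the adjacency matrix from which the spectral bound is
deduced: every rectangle has small discrepancy, and no large set of nodes has an atypical total
degree. -/
structure IsRegular (P : Matrix (Fin n) (Fin n) ℝ) (d C : ℝ) (A : Adj n) : Prop where
  abs_rectSum_le (S T : Finset (Fin n)) :
    |rectSum (centered P A) S T| ≤ discBound n d (32 * C) S.card T.card
  abs_rectSum_univ_lt (S : Finset (Fin n)) (hS : n / (2 * d) < S.card) :
    |rectSum (centered P A) S Finset.univ| < S.card * (16 * C * √(d * Real.log d))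

lemma prob_exists_discBound_lt_le (hsymm : ∀ u v, P u v = P v u)
    (hP : ∀ u v, 0 ≤ P u v ∧ P u v ≤ 1) (hd : 0 ≤ d) (hq : ∀ u v, P u v ≤ d / n) (hC : 1 ≤ C) :
    prob P {A | ∃ S T, discBound n d (32 * C) S.card T.card < |rectSum (centered P A) S T|} ≤
      2 * (∑ S : Finset (Fin n) with S.Nonempty, Real.exp (-(C * subsetEntropy n S.card))) ^ 2 := by
  let F : Finset (Finset (Fin n)) := {S | S.Nonempty}
  have hdisc (S T : Finset (Fin n)) : 0 ≤ discBound n d (32 * C) S.card T.card :=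
    discBound_nonneg (by positivity) (Nat.cast_nonneg _) (Nat.cast_nonneg _)
  have hsub : {A | ∃ S T, discBound n d (32 * C) S.card T.card < |rectSum (centered P A) S T|} ⊆
      {A | ∃ p ∈ F ×ˢ F,
        discBound n d (32 * C) p.1.card p.2.card ≤ |rectSum (centered P A) p.1 p.2|} := by
    rintro A ⟨S, T, h⟩
    have hne := abs_pos.1 ((hdisc S T).trans_lt h)
    have hS : S.Nonempty := Finset.nonempty_of_sum_ne_zero hne
    have hT : T.Nonempty := by
      by_contra! hT
      simp [rectSum, hT] at hne
    exact ⟨(S, T), by simp [F, hS, hT], h.le⟩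
  refine (prob_mono hP hsub).trans ((prob_exists_le hP _ _).trans ?_)
  rw [sq, Finset.sum_mul_sum, ← Finset.sum_product', Finset.mul_sum]
  refine Finset.sum_le_sum fun p hp => ?_
  obtain ⟨hS, hT⟩ : p.1.Nonempty ∧ p.2.Nonempty := by simpa [F] using hp
  exact prob_discBound_le_rectSum_le hsymm hP hd hq hC hS hT

lemma prob_exists_rectSum_univ_ge_le (hsymm : ∀ u v, P u v = P v u)
    (hP : ∀ u v, 0 ≤ P u v ∧ P u v ≤ 1) (hd : Real.exp 1 ≤ d) (hq : ∀ u v, P u v ≤ d / n)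
    (hC : 1 ≤ C) :
    prob P {A | ∃ S : Finset (Fin n), n / (2 * d) < S.card ∧
        S.card * (16 * C * √(d * Real.log d)) ≤ |rectSum (centered P A) S Finset.univ|} ≤
      2 * ∑ S : Finset (Fin n) with S.Nonempty, Real.exp (-(C * subsetEntropy n S.card)) := by
  classical
  have hd0 : 0 < d := (Real.exp_pos 1).trans_le hd
  let F : Finset (Finset (Fin n)) := {S | n / (2 * d) < S.card}
  have hsub : {A | ∃ S : Finset (Fin n), n / (2 * d) < S.card ∧
        S.card * (16 * C * √(d * Real.log d)) ≤ |rectSum (centered P A) S Finset.univ|} ⊆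
      {A | ∃ S ∈ F,
        S.card * (16 * C * √(d * Real.log d)) ≤ |rectSum (centered P A) S Finset.univ|} := by
    rintro A ⟨S, hS, h⟩
    exact ⟨S, by simpa [F] using hS, h⟩
  have hFne : F ⊆ ({S | S.Nonempty} : Finset (Finset (Fin n))) := fun S hS => by
    have : (0 : ℝ) < S.card := lt_of_le_of_lt (by positivity) (Finset.mem_filter.1 hS).2
    simpa using Finset.card_pos.1 (by exact_mod_cast this)
  refine (prob_mono hP hsub).trans ((prob_exists_le hP _ _).trans ?_)
  calc ∑ S ∈ F, prob P {A | S.card * (16 * C * √(d * Real.log d)) ≤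
          |rectSum (centered P A) S Finset.univ|}
      ≤ ∑ S ∈ F, 2 * Real.exp (-(C * subsetEntropy n S.card)) :=
        Finset.sum_le_sum fun S hS =>
          prob_rectSum_univ_ge_le hsymm hP hd hq hC (Finset.mem_filter.1 hS).2
    _ ≤ ∑ S : Finset (Fin n) with S.Nonempty, 2 * Real.exp (-(C * subsetEntropy n S.card)) :=
        Finset.sum_le_sum_of_subset_of_nonneg hFne fun _ _ _ => by positivity
    _ = 2 * ∑ S : Finset (Fin n) with S.Nonempty, Real.exp (-(C * subsetEntropy n S.card)) :=
        (Finset.mul_sum ..).symm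

theorem one_sub_rpow_le_prob_isRegular {C' : ℝ} (hsymm : ∀ u v, P u v = P v u)
    (hP : ∀ u v, 0 ≤ P u v ∧ P u v ≤ 1) (hd : Real.exp 1 ≤ d) (hq : ∀ u v, P u v ≤ d / n)
    (hC' : 0 ≤ C') :
    1 - (n : ℝ) ^ (-C') ≤ prob P {A | IsRegular P d (C' + 4) A} := by
  have hdisc := prob_exists_discBound_lt_le hsymm hP ((Real.exp_pos 1).le.trans hd) hq
    (by linarith : 1 ≤ C' + 4)
  have hdegree := prob_exists_rectSum_univ_ge_le hsymm hP hd hq (by linarith : 1 ≤ C' + 4)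
  set discBad := {A | ∃ S T, discBound n d (32 * (C' + 4)) S.card T.card <
    |rectSum (centered P A) S T|}
  set degreeBad := {A | ∃ S : Finset (Fin n), n / (2 * d) < S.card ∧
    S.card * (16 * (C' + 4) * √(d * Real.log d)) ≤ |rectSum (centered P A) S Finset.univ|}
  set σ := ∑ S : Finset (Fin n) with S.Nonempty, Real.exp (-((C' + 4) * subsetEntropy n S.card))
  have hσ : σ ≤ (n : ℝ) ^ (-C') * (1 / 4) := sum_exp_neg_subsetEntropy_le_rpow hC'
  have hσ0 : 0 ≤ σ := Finset.sum_nonneg fun _ _ => (Real.exp_pos _).le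
  have hsub : {A | IsRegular P d (C' + 4) A}ᶜ ⊆ discBad ∪ degreeBad := by
    intro A hA
    by_contra hgood
    obtain ⟨h₁, h₂⟩ := not_or.1 hgood
    exact hA ⟨fun S T => not_lt.1 fun h => h₁ ⟨S, T, h⟩,
      fun S hS => not_le.1 fun h => h₂ ⟨S, hS, h⟩⟩
  have hpow : (n : ℝ) ^ (-C') ≤ 1 := by
    rcases n.eq_zero_or_pos with rfl | hn
    · simpa using Real.zero_rpow_le_one (-C')
    · exact Real.rpow_le_one_of_one_le_of_nonpos (by exact_mod_cast hn) (by linarith)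
  refine le_trans ?_ (one_sub_prob_le_prob hP hsub)
  nlinarith [prob_union_le hP discBad degreeBad]

end Discrepancy

section DyadicSums

variable {M : ℕ} {s t : ℕ → ℝ} {n d D K X Y : ℝ}

lemma sum_two_pow_le_of_le (M : ℕ) {R : ℝ} (hR : 0 ≤ R) :
    ∑ j ∈ Finset.range M, (if (2 : ℝ) ^ j ≤ R then (2 : ℝ) ^ j else 0) ≤ 2 * R := by
  induction M with
  | zero => simpa using hR
  | succ M ih =>
    by_cases h : (2 : ℝ) ^ M ≤ R
    · calc _ ≤ ∑ j ∈ Finset.range (M + 1), (2 : ℝ) ^ j :=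
            Finset.sum_le_sum fun j _ => by split_ifs <;> simp
        _ ≤ 2 * R := by
            rw [geom_sum_eq (by norm_num), pow_succ]
            linarith
    · rwa [Finset.sum_range_succ, if_neg h, add_zero]

lemma sum_inv_two_pow_le_of_ge (M : ℕ) {R : ℝ} (hR : 0 < R) :
    ∑ j ∈ Finset.range M, (if R ≤ (2 : ℝ) ^ j then ((2 : ℝ) ^ j)⁻¹ else 0) ≤ 2 / R := by
  induction M generalizing R with
  | zero => simpa using (div_pos two_pos hR).le
  | succ M ih =>
    by_cases h : R ≤ 1
    · calc _ ≤ ∑ j ∈ Finset.range (M + 1), ((1 : ℝ) / 2) ^ j :=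
            Finset.sum_le_sum fun j _ => by split_ifs <;> simp
        _ ≤ 2 := sum_geometric_two_le _
        _ ≤ 2 / R := by rw [le_div_iff₀ hR]; linarith
    · have hshift : ∀ j : ℕ, (if R ≤ (2 : ℝ) ^ (j + 1) then ((2 : ℝ) ^ (j + 1))⁻¹ else 0) =
          2⁻¹ * (if R / 2 ≤ (2 : ℝ) ^ j then ((2 : ℝ) ^ j)⁻¹ else 0) := fun j => by
        simp only [pow_succ, ← div_le_iff₀ (two_pos (α := ℝ)), mul_inv, mul_comm _ (2⁻¹ : ℝ),
          mul_ite, mul_zero]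
      calc _ = 2⁻¹ * ∑ j ∈ Finset.range M,
            (if R / 2 ≤ (2 : ℝ) ^ j then ((2 : ℝ) ^ j)⁻¹ else 0) := by
            rw [Finset.sum_range_succ', pow_zero, if_neg h, add_zero, Finset.mul_sum]
            exact Finset.sum_congr rfl fun j _ => hshift j
        _ ≤ 2⁻¹ * (2 / (R / 2)) := by gcongr; exact ih (half_pos hR)
        _ = 2 / R := by field_simp

lemma card_window_le (M : ℕ) {R d : ℝ} (hd : Real.exp 1 ≤ d) :
    ({i ∈ Finset.range M | R ≤ √d * 2 ^ i ∧ (2 : ℝ) ^ i ≤ √d * R}.card : ℝ) ≤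
      3 * Real.log d := by
  have hd0 : 0 < d := (Real.exp_pos 1).trans_le hd
  have hlog : 1 ≤ Real.log d := (Real.le_log_iff_exp_le hd0).2 hd
  set W := {i ∈ Finset.range M | R ≤ √d * 2 ^ i ∧ (2 : ℝ) ^ i ≤ √d * R}
  rcases W.eq_empty_or_nonempty with h | h
  · rw [h, Finset.card_empty, Nat.cast_zero]
    positivity
  obtain ⟨k, hk⟩ := Nat.exists_eq_add_of_le (W.min'_le_max' h)
  have hcard : W.card ≤ k + 1 :=
    calc W.card ≤ (Finset.Icc (W.min' h) (W.max' h)).card :=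
          Finset.card_le_card fun i hi => Finset.mem_Icc.2 ⟨W.min'_le i hi, W.le_max' i hi⟩
      _ = k + 1 := by rw [Nat.card_Icc, hk]; omega
  have hpow : (2 : ℝ) ^ k ≤ d := by
    refine le_of_mul_le_mul_left ?_ (by positivity : (0 : ℝ) < 2 ^ W.min' h)
    calc (2 : ℝ) ^ W.min' h * 2 ^ k = 2 ^ W.max' h := by rw [hk, pow_add]
      _ ≤ √d * R := (Finset.mem_filter.1 (W.max'_mem h)).2.2
      _ ≤ √d * (√d * 2 ^ W.min' h) := by
          gcongr
          exact (Finset.mem_filter.1 (W.min'_mem h)).2.1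
      _ = 2 ^ W.min' h * d := by rw [← mul_assoc, Real.mul_self_sqrt hd0.le, mul_comm]
  have hk_log : k * Real.log 2 ≤ Real.log d := by
    rw [← Real.log_pow]
    exact Real.log_le_log (by positivity) hpow
  have : (0 : ℝ) ≤ k := k.cast_nonneg
  calc (W.card : ℝ) ≤ k + 1 := by exact_mod_cast hcard
    _ ≤ 3 * Real.log d := by nlinarith [Real.log_two_gt_d9]

lemma sq_two_pow_mul_sqrt (i : ℕ) {a : ℝ} (ha : 0 ≤ a) : ((2 : ℝ) ^ i * √a) ^ 2 = 4 ^ i * a := by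
  rw [mul_pow, Real.sq_sqrt ha, ← pow_mul, mul_comm i, pow_mul]
  norm_num

lemma sum_unbalanced_le {c : ℝ} (hs : ∀ i, 0 ≤ s i) (hX : 0 < X) (hY : 0 ≤ Y) (hc : 0 ≤ c)
    (hsX : ∑ i ∈ Finset.range M, (4 : ℝ) ^ i * s i ≤ X ^ 2) :
    ∑ i ∈ Finset.range M, ∑ j ∈ Finset.range M,
      (if (2 : ℝ) ^ j * X ≤ c * (2 ^ i * Y) then (2 : ℝ) ^ i * 2 ^ j * s i else 0) ≤
      2 * c * X * Y := by
  have hinner (i : ℕ) : ∑ j ∈ Finset.range M,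
      (if (2 : ℝ) ^ j * X ≤ c * (2 ^ i * Y) then (2 : ℝ) ^ i * 2 ^ j * s i else 0) ≤
      2 * c * Y / X * (4 ^ i * s i) := by
    have := hs i
    calc _ = 2 ^ i * s i * ∑ j ∈ Finset.range M,
          (if (2 : ℝ) ^ j ≤ c * (2 ^ i * Y) / X then (2 : ℝ) ^ j else 0) := by
          rw [Finset.mul_sum]
          refine Finset.sum_congr rfl fun j _ => ?_
          simp only [le_div_iff₀ hX, mul_ite, mul_zero, mul_right_comm]
      _ ≤ 2 ^ i * s i * (2 * (c * (2 ^ i * Y) / X)) := by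
          gcongr
          exact sum_two_pow_le_of_le M (by positivity)
      _ = 2 * c * Y / X * (4 ^ i * s i) := by
          rw [show (4 : ℝ) ^ i = 2 ^ i * 2 ^ i by rw [← mul_pow]; norm_num]
          ring
  calc _ ≤ ∑ i ∈ Finset.range M, 2 * c * Y / X * ((4 : ℝ) ^ i * s i) :=
        Finset.sum_le_sum fun i _ => hinner i
    _ ≤ 2 * c * Y / X * X ^ 2 := by rw [← Finset.mul_sum]; gcongr
    _ = 2 * c * X * Y := by field_simp

lemma two_pow_mul_sqrt_mul_root_le {a : ℝ} (hn : 0 < n) (ha : 0 ≤ a) (han : a ≤ n) (hY : 0 < Y)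
    (i : ℕ) (haY : 4 ^ i * a ≤ Y ^ 2) :
    (2 : ℝ) ^ i * √a * √√(a / n) ≤
      √n * (if (2 : ℝ) ^ i ≤ Y / √n then (2 : ℝ) ^ i else 0) +
        (4 ^ i * a / (2 * Y) +
          Y ^ 2 / √n / 2 * (if Y / √n ≤ (2 : ℝ) ^ i then ((2 : ℝ) ^ i)⁻¹ else 0)) := by
  have : 0 < √n := Real.sqrt_pos.2 hn
  rcases le_total ((2 : ℝ) ^ i) (Y / √n) with h | h
  · rw [if_pos h]
    have hroot : √√(a / n) ≤ 1 :=
      Real.sqrt_le_one.2 (Real.sqrt_le_one.2 ((div_le_one hn).2 han))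
    have hrest : 0 ≤ 4 ^ i * a / (2 * Y) +
        Y ^ 2 / √n / 2 * (if Y / √n ≤ (2 : ℝ) ^ i then ((2 : ℝ) ^ i)⁻¹ else 0) := by positivity
    calc (2 : ℝ) ^ i * √a * √√(a / n) ≤ 2 ^ i * √n * 1 := by gcongr
      _ = √n * 2 ^ i := by ring
      _ ≤ _ := le_add_of_nonneg_right hrest
  · have hsa : √a ≤ Y / 2 ^ i := by
      rw [le_div_iff₀' (by positivity)]
      exact abs_le_of_sq_le_sq' (by rwa [sq_two_pow_mul_sqrt i ha]) hY.le |>.2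
    have hroot : √√(a / n) ^ 2 ≤ Y / √n * ((2 : ℝ) ^ i)⁻¹ := by
      rw [Real.sq_sqrt (Real.sqrt_nonneg _), Real.sqrt_div ha]
      calc √a / √n ≤ Y / 2 ^ i / √n := by gcongr
        _ = Y / √n * ((2 : ℝ) ^ i)⁻¹ := by ring
    have hamgm : (2 : ℝ) ^ i * √a * √√(a / n) ≤
        (2 ^ i * √a) ^ 2 / (2 * Y) + Y / 2 * √√(a / n) ^ 2 := by
      rw [← sub_nonneg]
      have : (2 ^ i * √a) ^ 2 / (2 * Y) + Y / 2 * √√(a / n) ^ 2 - 2 ^ i * √a * √√(a / n) =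
          (2 ^ i * √a - Y * √√(a / n)) ^ 2 / (2 * Y) := by field_simp; ring
      rw [this]; positivity
    rw [if_pos h]
    refine (hamgm.trans ?_).trans (le_add_of_nonneg_left (by positivity))
    rw [sq_two_pow_mul_sqrt i ha]
    calc _ ≤ 4 ^ i * a / (2 * Y) + Y / 2 * (Y / √n * ((2 : ℝ) ^ i)⁻¹) := by gcongr
      _ = _ := by ring

lemma sum_two_pow_mul_sqrt_mul_root_le (hn : 0 < n) (hs : ∀ i, 0 ≤ s i) (hsn : ∀ i, s i ≤ n)
    (hX : 0 < X) (hsX : ∑ i ∈ Finset.range M, (4 : ℝ) ^ i * s i ≤ X ^ 2) :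
    ∑ i ∈ Finset.range M, (2 : ℝ) ^ i * √(s i) * √√(s i / n) ≤ 4 * X := by
  have : 0 < √n := Real.sqrt_pos.2 hn
  have hterm : ∀ i ∈ Finset.range M, 4 ^ i * s i ≤ X ^ 2 := fun i hi =>
    (Finset.single_le_sum (f := fun i => (4 : ℝ) ^ i * s i)
      (fun i _ => mul_nonneg (by positivity) (hs i)) hi).trans hsX
  refine (Finset.sum_le_sum fun i hi =>
    two_pow_mul_sqrt_mul_root_le hn (hs i) (hsn i) hX i (hterm i hi)).trans ?_
  simp only [Finset.sum_add_distrib, ← Finset.mul_sum, ← Finset.sum_div]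
  calc _ ≤ √n * (2 * (X / √n)) +
        (X ^ 2 / (2 * X) + X ^ 2 / √n / 2 * (2 / (X / √n))) := by
        gcongr
        · exact sum_two_pow_le_of_le M (by positivity)
        · exact sum_inv_two_pow_le_of_ge M (by positivity)
    _ ≤ 4 * X := by
        field_simp
        linarith

lemma sum_window_inner_le {R : ℝ} (ht : ∀ j, 0 ≤ t j) (hY : 0 ≤ Y) (hd : Real.exp 1 ≤ d)
    (htY : ∑ j ∈ Finset.range M, (4 : ℝ) ^ j * t j ≤ Y ^ 2) :
    ∑ j ∈ Finset.range M with R ≤ √d * 2 ^ j ∧ (2 : ℝ) ^ j ≤ √d * R, (2 : ℝ) ^ j * √(t j) ≤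
      2 * √(Real.log d) * Y := by
  have hlog : 1 ≤ Real.log d := (Real.le_log_iff_exp_le ((Real.exp_pos 1).trans_le hd)).2 hd
  refine abs_le_of_sq_le_sq' (sq_sum_le_card_mul_sum_sq.trans ?_) (by positivity) |>.2
  have hsq : ∑ j ∈ Finset.range M with R ≤ √d * 2 ^ j ∧ (2 : ℝ) ^ j ≤ √d * R,
      ((2 : ℝ) ^ j * √(t j)) ^ 2 ≤ Y ^ 2 := by
    refine (Finset.sum_le_sum_of_subset_of_nonneg (Finset.filter_subset _ _)
      fun _ _ _ => sq_nonneg _).trans ?_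
    simpa only [sq_two_pow_mul_sqrt _ (ht _)] using htY
  calc _ ≤ 3 * Real.log d * Y ^ 2 :=
        mul_le_mul (card_window_le M hd) hsq (Finset.sum_nonneg fun _ _ => sq_nonneg _)
          (by positivity)
    _ ≤ 4 * Real.log d * Y ^ 2 := by gcongr; norm_num
    _ = (2 * √(Real.log d) * Y) ^ 2 := by
        rw [mul_pow, mul_pow, Real.sq_sqrt (by linarith)]
        norm_num

lemma sum_window_le (hn : 0 < n) (hs : ∀ i, 0 ≤ s i) (hsn : ∀ i, s i ≤ n)
    (ht : ∀ j, 0 ≤ t j) (hX : 0 < X) (hY : 0 < Y) (hd : Real.exp 1 ≤ d)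
    (hsX : ∑ i ∈ Finset.range M, (4 : ℝ) ^ i * s i ≤ X ^ 2)
    (htY : ∑ j ∈ Finset.range M, (4 : ℝ) ^ j * t j ≤ Y ^ 2) :
    ∑ i ∈ Finset.range M, ∑ j ∈ Finset.range M,
      (if (2 : ℝ) ^ i * Y ≤ √d * (2 ^ j * X) ∧ (2 : ℝ) ^ j * X ≤ √d * (2 ^ i * Y) then
        (2 ^ i * √(s i) * √√(s i / n)) * (2 ^ j * √(t j)) else 0) ≤
      8 * √(Real.log d) * X * Y := by
  have hwindow (i j : ℕ) :
      ((2 : ℝ) ^ i * Y ≤ √d * (2 ^ j * X) ∧ (2 : ℝ) ^ j * X ≤ √d * (2 ^ i * Y)) ↔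
        2 ^ i * Y / X ≤ √d * 2 ^ j ∧ (2 : ℝ) ^ j ≤ √d * (2 ^ i * Y / X) := by
    rw [div_le_iff₀ hX, ← mul_div_assoc, le_div_iff₀ hX, mul_assoc]
  simp only [hwindow, ← Finset.sum_filter, ← Finset.mul_sum]
  calc _ ≤ ∑ i ∈ Finset.range M,
        (2 : ℝ) ^ i * √(s i) * √√(s i / n) * (2 * √(Real.log d) * Y) := by
        gcongr
        exact sum_window_inner_le ht hY.le hd htY
    _ ≤ 4 * X * (2 * √(Real.log d) * Y) := by
        rw [← Finset.sum_mul]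
        gcongr
        exact sum_two_pow_mul_sqrt_mul_root_le hn hs hsn hX hsX
    _ = 8 * √(Real.log d) * X * Y := by ring

/-- The part of the contribution of a pair `(i, j)` of dyadic levels that is charged to the level
set of size `s i`; exchanging the two sides gives the rest. The three summands are the strongly
unbalanced pairs, the linear term of `discBound`, and its square-root term, which only occurs in
the window of levels `2 ^ i * Y` and `2 ^ j * X` that are within a factor `√d` of each other. -/
noncomputable def levelMajorant (n d D K X Y : ℝ) (s t : ℕ → ℝ) (i j : ℕ) : ℝ :=
  D * d * (if (2 : ℝ) ^ j * X ≤ (√d)⁻¹ * (2 ^ i * Y) then 2 ^ i * 2 ^ j * s i else 0) +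
    K * (if (2 : ℝ) ^ j * X ≤ √d * (2 ^ i * Y) then 2 ^ i * 2 ^ j * s i else 0) +
    K * √d * (if (2 : ℝ) ^ i * Y ≤ √d * (2 ^ j * X) ∧ (2 : ℝ) ^ j * X ≤ √d * (2 ^ i * Y) then
      (2 ^ i * √(s i) * √√(s i / n)) * (2 ^ j * √(t j)) else 0)

lemma levelMajorant_nonneg (hd : 0 ≤ d) (hD : 0 ≤ D) (hK : 0 ≤ K) (hs : ∀ i, 0 ≤ s i)
    (i j : ℕ) : 0 ≤ levelMajorant n d D K X Y s t i j := by
  have := hs i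
  unfold levelMajorant
  positivity

lemma le_levelMajorant_of_unbalanced (hK : 0 ≤ K) (hs : ∀ i, 0 ≤ s i) {i j : ℕ}
    {e : ℝ} (he : e ≤ D * d * s i) (h : (2 : ℝ) ^ j * X ≤ (√d)⁻¹ * (2 ^ i * Y)) :
    2 ^ i * 2 ^ j * e ≤ levelMajorant n d D K X Y s t i j := by
  have := hs i
  rw [levelMajorant, if_pos h, add_assoc]
  calc 2 ^ i * 2 ^ j * e ≤ 2 ^ i * 2 ^ j * (D * d * s i) := by gcongr
    _ = D * d * (2 ^ i * 2 ^ j * s i) := by ring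
    _ ≤ _ := le_add_of_nonneg_right (by positivity)

lemma two_pow_mul_le_levelMajorant_add (hd : 0 < d) (hD : 0 ≤ D) (hK : 0 ≤ K)
    (hs : ∀ i, 0 ≤ s i) (ht : ∀ j, 0 ≤ t j) {i j : ℕ} {e : ℝ} (hes : e ≤ D * d * s i)
    (het : e ≤ D * d * t j) (hdisc : e ≤ discBound n d K (s i) (t j)) :
    2 ^ i * 2 ^ j * e ≤
      levelMajorant n d D K X Y s t i j + levelMajorant n d D K Y X t s j i := by
  by_cases hi : (2 : ℝ) ^ j * X ≤ (√d)⁻¹ * (2 ^ i * Y)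
  · exact (le_levelMajorant_of_unbalanced hK hs hes hi).trans
      (le_add_of_nonneg_right (levelMajorant_nonneg hd.le hD hK ht j i))
  by_cases hj : (2 : ℝ) ^ i * Y ≤ (√d)⁻¹ * (2 ^ j * X)
  · rw [mul_comm ((2 : ℝ) ^ i)]
    exact (le_levelMajorant_of_unbalanced hK ht het hj).trans
      (le_add_of_nonneg_left (levelMajorant_nonneg hd.le hD hK hs i j))
  have hsd : 0 < √d := Real.sqrt_pos.2 hd
  rw [levelMajorant, levelMajorant, if_neg hi, if_neg hj]
  rw [not_le, inv_mul_lt_iff₀ hsd] at hi hj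
  rw [if_pos hj.le, if_pos ⟨hi.le, hj.le⟩, if_pos hi.le, if_pos ⟨hj.le, hi.le⟩]
  calc 2 ^ i * 2 ^ j * e ≤ 2 ^ i * 2 ^ j * discBound n d K (s i) (t j) := by gcongr
    _ = _ := by
        rw [discBound, Real.sqrt_mul (mul_nonneg hd.le (hs i)), Real.sqrt_mul hd.le]
        ring

lemma sum_levelMajorant_le (hn : 0 < n) (hs : ∀ i, 0 ≤ s i) (hsn : ∀ i, s i ≤ n)
    (ht : ∀ j, 0 ≤ t j) (hX : 0 < X) (hY : 0 < Y) (hd : Real.exp 1 ≤ d) (hD : 0 ≤ D)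
    (hK : 0 ≤ K) (hsX : ∑ i ∈ Finset.range M, (4 : ℝ) ^ i * s i ≤ X ^ 2)
    (htY : ∑ j ∈ Finset.range M, (4 : ℝ) ^ j * t j ≤ Y ^ 2) :
    ∑ i ∈ Finset.range M, ∑ j ∈ Finset.range M, levelMajorant n d D K X Y s t i j ≤
      (2 * D + 10 * K) * √(d * Real.log d) * X * Y := by
  have hd0 : 0 < d := (Real.exp_pos 1).trans_le hd
  have hsd : 0 < √d := Real.sqrt_pos.2 hd0
  have hlog : 1 ≤ √(Real.log d) :=
    Real.one_le_sqrt.2 ((Real.le_log_iff_exp_le hd0).2 hd)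
  simp only [levelMajorant, Finset.sum_add_distrib, ← Finset.mul_sum]
  calc _ ≤ D * d * (2 * (√d)⁻¹ * X * Y) + K * (2 * √d * X * Y) +
        K * √d * (8 * √(Real.log d) * X * Y) := by
        gcongr
        · exact sum_unbalanced_le hs hX hY.le (by positivity) hsX
        · exact sum_unbalanced_le hs hX hY.le hsd.le hsX
        · exact sum_window_le hn hs hsn ht hX hY hd hsX htY
    _ = (2 * D + 2 * K) * (√d * 1) * X * Y + 8 * K * (√d * √(Real.log d)) * X * Y := by
        field_simp
        rw [Real.sq_sqrt hd0.le]
        ring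
    _ ≤ (2 * D + 2 * K) * (√d * √(Real.log d)) * X * Y +
          8 * K * (√d * √(Real.log d)) * X * Y := by gcongr
    _ = (2 * D + 10 * K) * √(d * Real.log d) * X * Y := by
        rw [Real.sqrt_mul hd0.le]; ring

lemma sum_levels_le {E : ℕ → ℕ → ℝ} (hn : 0 < n) (hs : ∀ i, 0 ≤ s i) (hsn : ∀ i, s i ≤ n)
    (ht : ∀ j, 0 ≤ t j) (htn : ∀ j, t j ≤ n) (hX : 0 < X) (hY : 0 < Y) (hd : Real.exp 1 ≤ d)
    (hD : 0 ≤ D) (hK : 0 ≤ K) (hsX : ∑ i ∈ Finset.range M, (4 : ℝ) ^ i * s i ≤ X ^ 2)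
    (htY : ∑ j ∈ Finset.range M, (4 : ℝ) ^ j * t j ≤ Y ^ 2)
    (hEs : ∀ i j, E i j ≤ D * d * s i) (hEt : ∀ i j, E i j ≤ D * d * t j)
    (hEdisc : ∀ i j, E i j ≤ discBound n d K (s i) (t j)) :
    ∑ i ∈ Finset.range M, ∑ j ∈ Finset.range M, (2 : ℝ) ^ i * 2 ^ j * E i j ≤
      (4 * D + 20 * K) * √(d * Real.log d) * X * Y := by
  have hd0 : 0 < d := (Real.exp_pos 1).trans_le hd
  calc _ ≤ ∑ i ∈ Finset.range M, ∑ j ∈ Finset.range M, levelMajorant n d D K X Y s t i j +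
        ∑ j ∈ Finset.range M, ∑ i ∈ Finset.range M, levelMajorant n d D K Y X t s j i := by
        rw [Finset.sum_comm (f := fun j i => levelMajorant n d D K Y X t s j i)]
        simp only [← Finset.sum_add_distrib]
        gcongr with i _ j _
        exact two_pow_mul_le_levelMajorant_add hd0 hD hK hs ht (hEs i j) (hEt i j) (hEdisc i j)
    _ ≤ (2 * D + 10 * K) * √(d * Real.log d) * X * Y +
          (2 * D + 10 * K) * √(d * Real.log d) * Y * X :=
        add_le_add (sum_levelMajorant_le hn hs hsn ht hX hY hd hD hK hsX htY)
          (sum_levelMajorant_le hn ht htn hs hY hX hd hD hK htY hsX)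
    _ = (4 * D + 20 * K) * √(d * Real.log d) * X * Y := by ring

end DyadicSums

section OperatorNorm

open scoped Matrix Matrix.Norms.L2Operator

variable {ι : Type*} [Fintype ι]

/-- The set of indices `u` for which the binary digit of weight `2 ^ i` of `x u` equals `1`. -/
def digitSet (x : ι → ℕ) (i : ℕ) : Finset ι := {u | (x u).testBit i}

lemma natCast_eq_sum_testBit {M m : ℕ} (hm : m < 2 ^ M) :
    (m : ℝ) = ∑ i ∈ Finset.range M, if m.testBit i then (2 : ℝ) ^ i else 0 := by
  have hdigits : (Finset.range M).filter (fun i => m.testBit i) = m.bitIndices.toFinset := by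
    ext i
    simp only [Finset.mem_filter, Finset.mem_range, List.mem_toFinset, Nat.mem_bitIndices,
      and_iff_right_iff_imp]
    exact fun hi => (Nat.pow_lt_pow_iff_right one_lt_two).1
      ((Nat.ge_two_pow_of_testBit hi).trans_lt hm)
  rw [← Finset.sum_filter, hdigits]
  exact_mod_cast (Finset.sum_toFinset_bitIndices_two_pow m).symm

lemma sum_four_pow_mul_card_digitSet_le {M : ℕ} {x : ι → ℕ} (hM : ∀ u, x u < 2 ^ M) :
    ∑ i ∈ Finset.range M, (4 : ℝ) ^ i * (digitSet x i).card ≤ ∑ u, (x u : ℝ) ^ 2 := by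
  have hlevel (i : ℕ) : (4 : ℝ) ^ i * (digitSet x i).card =
      ∑ u, (if (x u).testBit i then (2 : ℝ) ^ i else 0) ^ 2 := by
    rw [digitSet, Finset.card_filter, Nat.cast_sum, Finset.mul_sum]
    refine Finset.sum_congr rfl fun u _ => ?_
    split_ifs
    · rw [← pow_mul, mul_comm i 2, pow_mul]
      norm_num
    · simp
  calc ∑ i ∈ Finset.range M, (4 : ℝ) ^ i * (digitSet x i).card
      = ∑ u, ∑ i ∈ Finset.range M, (if (x u).testBit i then (2 : ℝ) ^ i else 0) ^ 2 := by
        simp_rw [hlevel]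
        exact Finset.sum_comm
    _ ≤ ∑ u, (∑ i ∈ Finset.range M, if (x u).testBit i then (2 : ℝ) ^ i else 0) ^ 2 :=
        Finset.sum_le_sum fun u _ => Finset.sum_sq_le_sq_sum_of_nonneg fun i _ => by positivity
    _ = ∑ u, (x u : ℝ) ^ 2 := by simp only [← natCast_eq_sum_testBit (hM _)]

lemma natCast_dotProduct_mulVec_natCast (B : Matrix ι ι ℝ) {M : ℕ} {x y : ι → ℕ}
    (hx : ∀ u, x u < 2 ^ M) (hy : ∀ v, y v < 2 ^ M) :
    (fun u => (x u : ℝ)) ⬝ᵥ B *ᵥ (fun v => (y v : ℝ)) =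
      ∑ i ∈ Finset.range M, ∑ j ∈ Finset.range M,
        2 ^ i * 2 ^ j * rectSum B (digitSet x i) (digitSet y j) := by
  classical
  have hterm (i j : ℕ) : 2 ^ i * 2 ^ j * rectSum B (digitSet x i) (digitSet y j) =
      (fun u => if (x u).testBit i then (2 : ℝ) ^ i else 0) ⬝ᵥ
        B *ᵥ (fun v => if (y v).testBit j then (2 : ℝ) ^ j else 0) := by
    simp only [rectSum_eq_sum_ite, Matrix.mulVec, dotProduct, Finset.mul_sum]
    refine Finset.sum_congr rfl fun u _ => Finset.sum_congr rfl fun v _ => ?_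
    by_cases hu : (x u).testBit i <;> by_cases hv : (y v).testBit j <;> simp [digitSet, hu, hv]
    ring
  have hsum {z : ι → ℕ} (hz : ∀ u, z u < 2 ^ M) : (fun u => (z u : ℝ)) =
      ∑ i ∈ Finset.range M, fun u => if (z u).testBit i then (2 : ℝ) ^ i else 0 := by
    ext u
    rw [natCast_eq_sum_testBit (hz u), Finset.sum_apply]
  simp only [hterm, hsum hx, hsum hy, Matrix.mulVec_sum, dotProduct_sum, sum_dotProduct]
  exact Finset.sum_comm

/-- The rectangle sums of `B` are at most `D * d` per row or column of the rectangle, and satisfy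
the discrepancy bound with constant `K`. -/
structure RectangleBounds (B : Matrix ι ι ℝ) (d D K : ℝ) : Prop where
  abs_rectSum_le_row (S T : Finset ι) : |rectSum B S T| ≤ D * d * S.card
  abs_rectSum_le_col (S T : Finset ι) : |rectSum B S T| ≤ D * d * T.card
  abs_rectSum_le_discBound (S T : Finset ι) :
    |rectSum B S T| ≤ discBound (Fintype.card ι) d K S.card T.card

namespace RectangleBounds

variable {B : Matrix ι ι ℝ} {d D K : ℝ}

lemma abs_natCast_bilin_le (h : RectangleBounds B d D K) (hd : Real.exp 1 ≤ d) (hD : 0 ≤ D)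
    (hK : 0 ≤ K) (x y : ι → ℕ) :
    |(fun u => (x u : ℝ)) ⬝ᵥ B *ᵥ (fun v => (y v : ℝ))| ≤ (4 * D + 20 * K) * √(d * Real.log d) *
      ‖WithLp.toLp 2 fun u => (x u : ℝ)‖ * ‖WithLp.toLp 2 fun v => (y v : ℝ)‖ := by
  rcases eq_or_ne (fun u => (x u : ℝ)) 0 with hx | hx
  · simp [hx]
  rcases eq_or_ne (fun v => (y v : ℝ)) 0 with hy | hy
  · simp [hy]
  obtain ⟨u, -⟩ := Function.ne_iff.1 hx
  have hι : 0 < Fintype.card ι := Fintype.card_pos_iff.2 ⟨u⟩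
  let M := ∑ u, (x u + y u)
  have hM (u : ι) : x u + y u < 2 ^ M :=
    (Finset.single_le_sum (f := fun u => x u + y u) (fun _ _ => Nat.zero_le _)
      (Finset.mem_univ u)).trans_lt Nat.lt_two_pow_self
  have hxM (u : ι) : x u < 2 ^ M := (Nat.le_add_right _ _).trans_lt (hM u)
  have hyM (u : ι) : y u < 2 ^ M := (Nat.le_add_left _ _).trans_lt (hM u)
  have hmass {z : ι → ℕ} (hz : ∀ u, z u < 2 ^ M) :
      ∑ i ∈ Finset.range M, (4 : ℝ) ^ i * (digitSet z i).card ≤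
        ‖WithLp.toLp 2 fun u => (z u : ℝ)‖ ^ 2 := by
    simpa [EuclideanSpace.norm_sq_eq] using sum_four_pow_mul_card_digitSet_le hz
  have hcard (z : ι → ℕ) (i : ℕ) : ((digitSet z i).card : ℝ) ≤ Fintype.card ι := by
    exact_mod_cast Finset.card_le_univ _
  have hpos {z : ι → ℝ} (hz : z ≠ 0) : 0 < ‖WithLp.toLp 2 z‖ := by simpa using hz
  calc |(fun u => (x u : ℝ)) ⬝ᵥ B *ᵥ (fun v => (y v : ℝ))|
      ≤ ∑ i ∈ Finset.range M, ∑ j ∈ Finset.range M,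
          2 ^ i * 2 ^ j * |rectSum B (digitSet x i) (digitSet y j)| := by
        rw [natCast_dotProduct_mulVec_natCast B hxM hyM]
        refine (Finset.abs_sum_le_sum_abs _ _).trans (Finset.sum_le_sum fun i _ =>
          (Finset.abs_sum_le_sum_abs _ _).trans_eq (Finset.sum_congr rfl fun j _ => ?_))
        rw [abs_mul, abs_of_pos (by positivity : (0 : ℝ) < 2 ^ i * 2 ^ j)]
    _ ≤ _ := sum_levels_le (by exact_mod_cast hι) (fun _ => Nat.cast_nonneg _) (hcard x)
        (fun _ => Nat.cast_nonneg _) (hcard y) (hpos hx) (hpos hy) hd hD hK (hmass hxM) (hmass hyM)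
        (fun _ _ => h.abs_rectSum_le_row _ _) (fun _ _ => h.abs_rectSum_le_col _ _)
        (fun _ _ => h.abs_rectSum_le_discBound _ _)

lemma abs_bilin_le_of_nonneg (h : RectangleBounds B d D K) (hd : Real.exp 1 ≤ d) (hD : 0 ≤ D)
    (hK : 0 ≤ K) {x y : ι → ℝ} (hx : 0 ≤ x) (hy : 0 ≤ y) :
    |x ⬝ᵥ B *ᵥ y| ≤
      (4 * D + 20 * K) * √(d * Real.log d) * ‖WithLp.toLp 2 x‖ * ‖WithLp.toLp 2 y‖ := by
  let grid (N : ℕ) (z : ι → ℝ) : ι → ℝ := (N : ℝ)⁻¹ • fun u => (⌊z u * N⌋₊ : ℝ)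
  have hlim {z : ι → ℝ} (hz : 0 ≤ z) : Tendsto (grid · z) atTop (nhds z) := by
    refine tendsto_pi_nhds.2 fun u => ?_
    simpa only [grid, Pi.smul_apply, smul_eq_mul, inv_mul_eq_div, Function.comp_def] using
      (tendsto_nat_floor_mul_div_atTop (hz u)).comp tendsto_natCast_atTop_atTop
  have hbilin : Continuous fun z : (ι → ℝ) × (ι → ℝ) => |z.1 ⬝ᵥ B *ᵥ z.2| := by fun_prop
  have hnorm : Continuous fun z : (ι → ℝ) × (ι → ℝ) => (4 * D + 20 * K) * √(d * Real.log d) *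
      ‖WithLp.toLp 2 z.1‖ * ‖WithLp.toLp 2 z.2‖ := by fun_prop
  have hpair := (hlim hx).prodMk_nhds (hlim hy)
  refine le_of_tendsto_of_tendsto' ((hbilin.tendsto (x, y)).comp hpair)
    ((hnorm.tendsto (x, y)).comp hpair) fun N => ?_
  have hle := h.abs_natCast_bilin_le hd hD hK (fun u => ⌊x u * N⌋₊) (fun u => ⌊y u * N⌋₊)
  simp only [Function.comp_apply, grid, smul_dotProduct, Matrix.mulVec_smul, dotProduct_smul,
    smul_eq_mul, abs_mul, WithLp.toLp_smul, norm_smul, Real.norm_eq_abs]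
  linear_combination |(N : ℝ)⁻¹| ^ 2 * hle

lemma abs_bilin_le (h : RectangleBounds B d D K) (hd : Real.exp 1 ≤ d) (hD : 0 ≤ D) (hK : 0 ≤ K)
    (x y : ι → ℝ) : |x ⬝ᵥ B *ᵥ y| ≤
      4 * (4 * D + 20 * K) * √(d * Real.log d) * ‖WithLp.toLp 2 x‖ * ‖WithLp.toLp 2 y‖ := by
  have hpart {z z' : ι → ℝ} (hz : 0 ≤ z') (hle : z' ≤ |z|) :
      ‖WithLp.toLp 2 z'‖ ≤ ‖WithLp.toLp 2 z‖ := by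
    rw [EuclideanSpace.norm_eq, EuclideanSpace.norm_eq]
    gcongr with u
    simpa [abs_of_nonneg (hz u)] using hle u
  have hposPart (z : ι → ℝ) : z⁺ ≤ |z| := by
    rw [← posPart_add_negPart z]
    exact le_add_of_nonneg_right (negPart_nonneg z)
  have hnegPart (z : ι → ℝ) : z⁻ ≤ |z| := by
    rw [← posPart_add_negPart z]
    exact le_add_of_nonneg_left (posPart_nonneg z)
  have hbound {x' y' : ι → ℝ} (hx : 0 ≤ x') (hxx : x' ≤ |x|) (hy : 0 ≤ y') (hyy : y' ≤ |y|) :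
      |x' ⬝ᵥ B *ᵥ y'| ≤
        (4 * D + 20 * K) * √(d * Real.log d) * ‖WithLp.toLp 2 x‖ * ‖WithLp.toLp 2 y‖ := by
    refine (h.abs_bilin_le_of_nonneg hd hD hK hx hy).trans ?_
    have := hpart hx hxx
    have := hpart hy hyy
    gcongr
  have hsplit : x ⬝ᵥ B *ᵥ y =
      x⁺ ⬝ᵥ B *ᵥ y⁺ - x⁺ ⬝ᵥ B *ᵥ y⁻ - x⁻ ⬝ᵥ B *ᵥ y⁺ + x⁻ ⬝ᵥ B *ᵥ y⁻ := by
    conv_lhs => rw [← posPart_sub_negPart x, ← posPart_sub_negPart y]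
    simp only [Matrix.mulVec_sub, sub_dotProduct, dotProduct_sub]
    ring
  have hpp := hbound (posPart_nonneg x) (hposPart x) (posPart_nonneg y) (hposPart y)
  have hpn := hbound (posPart_nonneg x) (hposPart x) (negPart_nonneg y) (hnegPart y)
  have hnp := hbound (negPart_nonneg x) (hnegPart x) (posPart_nonneg y) (hposPart y)
  have hnn := hbound (negPart_nonneg x) (hnegPart x) (negPart_nonneg y) (hnegPart y)
  rw [hsplit]
  rw [abs_le] at *
  constructor <;> linarith

theorem norm_le [DecidableEq ι] (h : RectangleBounds B d D K) (hd : Real.exp 1 ≤ d) (hD : 0 ≤ D)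
    (hK : 0 ≤ K) : ‖B‖ ≤ 4 * (4 * D + 20 * K) * √(d * Real.log d) := by
  rw [← Matrix.l2_opNorm_toEuclideanCLM]
  refine ContinuousLinearMap.opNorm_le_of_re_inner_le (𝕜 := ℝ) (by positivity) fun x y hx hy => ?_
  have hle := h.abs_bilin_le hd hD hK y.ofLp x.ofLp
  simp only [WithLp.toLp_ofLp, hx, hy, mul_one] at hle
  rw [real_inner_comm, Matrix.inner_toEuclideanCLM]
  exact (le_abs_self _).trans hle

end RectangleBounds

end OperatorNorm

section LaplacianPerturbation

open scoped Matrix.Norms.L2Operator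

lemma norm_le_card_mul_of_abs_le {ι : Type*} [Fintype ι] [DecidableEq ι] {M : Matrix ι ι ℝ} {b : ℝ}
    (hM : ∀ u v, |M u v| ≤ b) : ‖M‖ ≤ Fintype.card ι * b := by
  rcases isEmpty_or_nonempty ι with h | ⟨⟨w⟩⟩
  · simp [Subsingleton.elim M 0]
  have hb : 0 ≤ b := (abs_nonneg _).trans (hM w w)
  have hsq {z : EuclideanSpace ℝ ι} (hz : ‖z‖ = 1) : ∑ u, z u ^ 2 = 1 := by
    simpa [hz] using (EuclideanSpace.norm_sq_eq z).symm
  rw [← Matrix.l2_opNorm_toEuclideanCLM]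
  refine ContinuousLinearMap.opNorm_le_of_re_inner_le (𝕜 := ℝ) (by positivity) fun x y hx hy => ?_
  rw [real_inner_comm, Matrix.inner_toEuclideanCLM]
  calc y ⬝ᵥ M.mulVec x = ∑ u, ∑ v, y u * x v * M u v := by
        simp only [dotProduct, Matrix.mulVec, Finset.mul_sum]
        exact Finset.sum_congr rfl fun u _ => Finset.sum_congr rfl fun v _ => by ring
    _ ≤ ∑ u, ∑ v, (y u ^ 2 + x v ^ 2) / 2 * b := by
        refine Finset.sum_le_sum fun u _ => Finset.sum_le_sum fun v _ =>
          (le_abs_self _).trans ?_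
        rw [abs_mul, abs_mul]
        gcongr
        · linarith [two_mul_le_add_sq |y u| |x v|, sq_abs (y u), sq_abs (x v)]
        · exact hM u v
    _ = Fintype.card ι * b := by
        simp only [← Finset.sum_mul, ← Finset.sum_div, Finset.sum_add_distrib, Finset.sum_const,
          Finset.card_univ, nsmul_eq_mul, ← Finset.mul_sum, hsq hx, hsq hy]
        ring

lemma opNorm_le_norm {n : ℕ} (M : Matrix (Fin n) (Fin n) ℝ) : opNorm M ≤ ‖M‖ := by
  refine Real.sSup_le ?_ (norm_nonneg M)
  rintro _ ⟨x, hx, rfl⟩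
  have hnorm (z : Fin n → ℝ) : ‖WithLp.toLp 2 z‖ = sqnorm z := by
    simp [EuclideanSpace.norm_eq, sqnorm]
  simpa [hnorm, hx] using Matrix.l2_opNorm_mulVec M (WithLp.toLp 2 x)

lemma inv_sqrt_le_inv_sqrt {a τ : ℝ} (hτ : 0 < τ) (ha : τ ≤ a) : (√a)⁻¹ ≤ (√τ)⁻¹ :=
  inv_anti₀ (Real.sqrt_pos.2 hτ) (Real.sqrt_le_sqrt ha)

lemma abs_inv_sqrt_sub_inv_sqrt_le {a p τ Δ : ℝ} (hτ : 0 < τ) (ha : τ ≤ a) (hp : τ ≤ p)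
    (h : |a - p| ≤ Δ) : |(√a)⁻¹ - (√p)⁻¹| ≤ Δ / (2 * τ * √τ) := by
  have : 0 < √τ := Real.sqrt_pos.2 hτ
  have hsa : 0 < √a := Real.sqrt_pos.2 (hτ.trans_le ha)
  have hsp : 0 < √p := Real.sqrt_pos.2 (hτ.trans_le hp)
  have hdiff : (√a)⁻¹ - (√p)⁻¹ = (p - a) / (√a * √p * (√a + √p)) := by
    have ha' := Real.sq_sqrt (hτ.le.trans ha)
    have hp' := Real.sq_sqrt (hτ.le.trans hp)
    field_simp
    linear_combination hp' - ha'
  have hden : 2 * τ * √τ ≤ √a * √p * (√a + √p) := by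
    calc 2 * τ * √τ = √τ * √τ * (√τ + √τ) := by rw [Real.mul_self_sqrt hτ.le]; ring
      _ ≤ √a * √p * (√a + √p) := by gcongr
  have hΔ : 0 ≤ Δ := (abs_nonneg _).trans h
  rw [hdiff, abs_div, abs_sub_comm, abs_of_pos (a := √a * √p * (√a + √p)) (by positivity)]
  gcongr

lemma abs_inv_sqrt_mul_sub_le {a b p q τ Δ : ℝ} (hτ : 0 < τ) (ha : τ ≤ a) (hb : τ ≤ b)
    (hp : τ ≤ p) (hq : τ ≤ q) (hap : |a - p| ≤ Δ) (hbq : |b - q| ≤ Δ) :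
    |(√a)⁻¹ * (√b)⁻¹ - (√p)⁻¹ * (√q)⁻¹| ≤ Δ / τ ^ 2 := by
  have : 0 < √τ := Real.sqrt_pos.2 hτ
  have hΔ : 0 ≤ Δ := (abs_nonneg _).trans hap
  calc |(√a)⁻¹ * (√b)⁻¹ - (√p)⁻¹ * (√q)⁻¹|
      = |((√a)⁻¹ - (√p)⁻¹) * (√b)⁻¹ + (√p)⁻¹ * ((√b)⁻¹ - (√q)⁻¹)| := by ring_nf
    _ ≤ |(√a)⁻¹ - (√p)⁻¹| * (√b)⁻¹ + (√p)⁻¹ * |(√b)⁻¹ - (√q)⁻¹| := by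
        refine (abs_add_le _ _).trans_eq ?_
        rw [abs_mul, abs_mul, abs_of_nonneg (inv_nonneg.2 (Real.sqrt_nonneg b)),
          abs_of_nonneg (inv_nonneg.2 (Real.sqrt_nonneg p))]
    _ ≤ Δ / (2 * τ * √τ) * (√τ)⁻¹ + (√τ)⁻¹ * (Δ / (2 * τ * √τ)) := by
        gcongr
        · exact abs_inv_sqrt_sub_inv_sqrt_le hτ ha hp hap
        · exact abs_inv_sqrt_sub_inv_sqrt_le hτ hb hq hbq
    _ = Δ / τ ^ 2 := by
        have := Real.sq_sqrt hτ.le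
        field_simp
        rw [this]
        ring

variable {n : ℕ} {M N : Matrix (Fin n) (Fin n) ℝ}

lemma lap_apply_of_rowSum_nonneg (hM : ∀ u, 0 ≤ ∑ w, M u w) (u v : Fin n) :
    lap M u v = M u v * ((√(∑ w, M u w))⁻¹ * (√(∑ w, M v w))⁻¹) := by
  rw [lap, Real.sqrt_mul (hM u), div_eq_mul_inv, mul_inv]

lemma restrictM_lap_sub_eq (hM : ∀ u, 0 ≤ ∑ w, M u w) (hN : ∀ u, 0 ≤ ∑ w, N u w)
    (J : Finset (Fin n)) :
    restrictM (lap M - lap N) J =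
      Matrix.diagonal (fun u => (√(∑ w, M u w))⁻¹) * restrictM (M - N) J *
        Matrix.diagonal (fun u => (√(∑ w, M u w))⁻¹) +
      restrictM (Matrix.of fun u v => N u v * ((√(∑ w, M u w))⁻¹ * (√(∑ w, M v w))⁻¹ -
        (√(∑ w, N u w))⁻¹ * (√(∑ w, N v w))⁻¹)) J := by
  ext u v
  simp only [restrictM, Matrix.add_apply, Matrix.sub_apply, Matrix.mul_diagonal,
    Matrix.diagonal_mul, Matrix.of_apply, lap_apply_of_rowSum_nonneg hM,
    lap_apply_of_rowSum_nonneg hN]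
  split_ifs <;> ring

theorem norm_restrictM_lap_sub_le {J : Finset (Fin n)} {τ Δ b : ℝ} (hτ : 0 < τ) (hΔ : 0 ≤ Δ)
    (hM : ∀ u, τ ≤ ∑ w, M u w) (hN : ∀ u, τ ≤ ∑ w, N u w) (hb : ∀ u v, |N u v| ≤ b)
    (hMN : ∀ u ∈ J, |∑ w, M u w - ∑ w, N u w| ≤ Δ) :
    ‖restrictM (lap M - lap N) J‖ ≤ ‖restrictM (M - N) J‖ / τ + n * b * Δ / τ ^ 2 := by
  rw [restrictM_lap_sub_eq (fun u => hτ.le.trans (hM u)) fun u => hτ.le.trans (hN u)]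
  set α : Fin n → ℝ := fun u => (√(∑ w, M u w))⁻¹
  have hα : ‖Matrix.diagonal α‖ ≤ (√τ)⁻¹ := by
    rw [Matrix.l2_opNorm_diagonal]
    refine (pi_norm_le_iff_of_nonneg (by positivity)).2 fun u => ?_
    rw [Real.norm_of_nonneg (by positivity)]
    exact inv_sqrt_le_inv_sqrt hτ (hM u)
  refine (norm_add_le _ _).trans (add_le_add ?_ ?_)
  · calc ‖Matrix.diagonal α * restrictM (M - N) J * Matrix.diagonal α‖
        ≤ ‖Matrix.diagonal α‖ * ‖restrictM (M - N) J‖ * ‖Matrix.diagonal α‖ :=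
          (Matrix.l2_opNorm_mul _ _).trans (by gcongr; exact Matrix.l2_opNorm_mul _ _)
      _ ≤ (√τ)⁻¹ * ‖restrictM (M - N) J‖ * (√τ)⁻¹ := by gcongr
      _ = ‖restrictM (M - N) J‖ / τ := by
          rw [mul_right_comm, ← mul_inv, Real.mul_self_sqrt hτ.le, inv_mul_eq_div]
  · refine (norm_le_card_mul_of_abs_le (b := b * (Δ / τ ^ 2)) fun u v => ?_).trans_eq ?_
    · have hb0 : 0 ≤ b := (abs_nonneg _).trans (hb u v)
      rw [restrictM]
      split_ifs with h
      · rw [Matrix.of_apply, abs_mul]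
        gcongr
        · exact hb u v
        · exact abs_inv_sqrt_mul_sub_le hτ (hM u) (hM v) (hN u) (hN v) (hMN u h.1) (hMN v h.2)
      · rw [abs_zero]
        positivity
    · rw [Fintype.card_fin]
      ring

end LaplacianPerturbation

section TypicalNodes

open scoped Matrix.Norms.L2Operator

variable {n : ℕ} {P : Matrix (Fin n) (Fin n) ℝ} {A : Adj n} {J : Finset (Fin n)} {d D K Δ : ℝ}

lemma rectSum_restrictM (B : Matrix (Fin n) (Fin n) ℝ) (J S T : Finset (Fin n)) :
    rectSum (restrictM B J) S T = rectSum B (S ∩ J) (T ∩ J) := by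
  simp only [rectSum, restrictM, ite_and, Finset.sum_ite_irrel, Finset.sum_const_zero,
    Finset.sum_ite_mem]

lemma discBound_mono {n d K s s' t t' : ℝ} (hn : 0 ≤ n) (hd : 0 ≤ d) (hK : 0 ≤ K) (hs : 0 ≤ s)
    (ht : 0 ≤ t) (hss' : s ≤ s') (htt' : t ≤ t') : discBound n d K s t ≤ discBound n d K s' t' := by
  have := hs.trans hss'
  unfold discBound
  gcongr

lemma abs_rectSum_restrictM_le {B : Matrix (Fin n) (Fin n) ℝ} {b : ℝ} (hb : 0 ≤ b)
    (hrow : ∀ u ∈ J, ∑ v, |B u v| ≤ b) (S T : Finset (Fin n)) :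
    |rectSum (restrictM B J) S T| ≤ b * S.card :=
  calc |rectSum (restrictM B J) S T| = |∑ u ∈ S ∩ J, ∑ v ∈ T ∩ J, B u v| := by
        rw [rectSum_restrictM, rectSum]
    _ ≤ ∑ u ∈ S ∩ J, ∑ v ∈ T ∩ J, |B u v| := (Finset.abs_sum_le_sum_abs _ _).trans
        (Finset.sum_le_sum fun _ _ => Finset.abs_sum_le_sum_abs _ _)
    _ ≤ ∑ _u ∈ S ∩ J, b := Finset.sum_le_sum fun u hu =>
        (Finset.sum_le_sum_of_subset_of_nonneg (Finset.subset_univ _)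
          fun _ _ _ => abs_nonneg _).trans (hrow u (Finset.mem_inter.1 hu).2)
    _ ≤ b * S.card := by
        rw [Finset.sum_const, nsmul_eq_mul, mul_comm]
        gcongr
        exact Finset.inter_subset_left

lemma rectangleBounds_restrictM {B : Matrix (Fin n) (Fin n) ℝ} (hB : B.IsSymm) (hd : 0 ≤ d)
    (hD : 0 ≤ D) (hK : 0 ≤ K) (hrow : ∀ u ∈ J, ∑ v, |B u v| ≤ D * d)
    (hdisc : ∀ S T, |rectSum B S T| ≤ discBound n d K S.card T.card) :
    RectangleBounds (restrictM B J) d D K where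
  abs_rectSum_le_row := abs_rectSum_restrictM_le (by positivity) hrow
  abs_rectSum_le_col S T := by
    have hswap : rectSum (restrictM B J) S T = rectSum (restrictM B J) T S := by
      rw [rectSum_restrictM, rectSum_restrictM]
      exact Finset.sum_comm.trans
        (Finset.sum_congr rfl fun v _ => Finset.sum_congr rfl fun u _ => hB.apply v u)
    exact hswap ▸ abs_rectSum_restrictM_le (by positivity) hrow T S
  abs_rectSum_le_discBound S T := by
    rw [rectSum_restrictM, Fintype.card_fin]
    refine (hdisc _ _).trans ?_
    apply discBound_mono <;> first | positivity | gcongr; exact Finset.inter_subset_left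

lemma IsSimple.isSymm_centered (hA : IsSimple A) (hsymm : ∀ u v, P u v = P v u) :
    (centered P A).IsSymm := by
  ext u v
  simp only [Matrix.transpose_apply, centered, aVal, hA.2 v u, hsymm v u, eq_comm (a := v)]

lemma IsSimple.sub_eq_centered_sub_diagonal (hA : IsSimple A) :
    adjMat A - P = centered P A - Matrix.diagonal fun u => P u u := by
  ext u v
  rcases eq_or_ne u v with rfl | huv
  · simp [adjMat, centered, aVal, hA.1]
  · simp [adjMat, centered, huv]

/-- The nodes whose degree deviates from its mean by less than `Δ`. -/
noncomputable def typicalNodes (P : Matrix (Fin n) (Fin n) ℝ) (A : Adj n) (Δ : ℝ) :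
    Finset (Fin n) := {u | |∑ v, centered P A u v| < Δ}

lemma mem_typicalNodes {u : Fin n} : u ∈ typicalNodes P A Δ ↔ |∑ v, centered P A u v| < Δ := by
  simp [typicalNodes]

lemma sub_card_typicalNodes_le (hd : 0 < d)
    (h : ∀ S : Finset (Fin n), n / (2 * d) < S.card →
      |rectSum (centered P A) S Finset.univ| < S.card * Δ) :
    (n : ℝ) - (typicalNodes P A Δ).card ≤ n / d := by
  classical
  let high : Finset (Fin n) := {u | Δ ≤ ∑ v, centered P A u v}
  let low : Finset (Fin n) := {u | ∑ v, centered P A u v ≤ -Δ}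
  have hhigh : (high.card : ℝ) ≤ n / (2 * d) := by
    by_contra! hcard
    have hsum := Finset.card_nsmul_le_sum high (fun u => ∑ v, centered P A u v) Δ
      fun u hu => (Finset.mem_filter.1 hu).2
    rw [nsmul_eq_mul] at hsum
    exact (hsum.trans (le_abs_self _)).not_gt (h high hcard)
  have hlow : (low.card : ℝ) ≤ n / (2 * d) := by
    by_contra! hcard
    have hsum := Finset.sum_le_card_nsmul low (fun u => ∑ v, centered P A u v) (-Δ)
      fun u hu => (Finset.mem_filter.1 hu).2
    rw [nsmul_eq_mul, mul_neg, le_neg] at hsum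
    exact (hsum.trans (neg_le_abs _)).not_gt (h low hcard)
  have hcover : (typicalNodes P A Δ)ᶜ ⊆ high ∪ low := by
    intro u hu
    simpa [mem_typicalNodes, high, low, le_abs, le_neg] using hu
  have hcard : ((typicalNodes P A Δ)ᶜ.card : ℝ) ≤ high.card + low.card := by
    exact_mod_cast (Finset.card_le_card hcover).trans (Finset.card_union_le _ _)
  rw [Finset.card_compl, Fintype.card_fin, Nat.cast_sub (card_finset_fin_le _)] at hcard
  calc (n : ℝ) - (typicalNodes P A Δ).card ≤ n / (2 * d) + n / (2 * d) := by linarith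
    _ = n / d := by field_simp; ring

lemma sum_abs_centered_le_of_mem_typicalNodes (hP : ∀ u v, 0 ≤ P u v) (hq : ∀ u v, P u v ≤ d / n)
    {u : Fin n} (hu : u ∈ typicalNodes P A Δ) : ∑ v, |centered P A u v| ≤ Δ + 2 * d := by
  have habs (v : Fin n) : |centered P A u v| ≤ centered P A u v + 2 * P u v := by
    have hPv := hP u v
    rw [centered]
    split_ifs
    · simpa using hPv
    · have haVal : 0 ≤ aVal A u v := by unfold aVal; positivity
      exact abs_le.2 ⟨by linarith, by linarith⟩
  have hrow : ∑ v, P u v ≤ d :=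
    calc ∑ v, P u v ≤ ∑ _v : Fin n, d / n := Finset.sum_le_sum fun v _ => hq u v
      _ = d := by
        have : (n : ℝ) ≠ 0 := by exact_mod_cast u.pos.ne'
        simp
        field_simp
  calc ∑ v, |centered P A u v| ≤ ∑ v, (centered P A u v + 2 * P u v) :=
        Finset.sum_le_sum fun v _ => habs v
    _ = ∑ v, centered P A u v + 2 * ∑ v, P u v := by rw [Finset.sum_add_distrib, Finset.mul_sum]
    _ ≤ Δ + 2 * d := by
        have := (le_abs_self _).trans (mem_typicalNodes.1 hu).le
        gcongr

lemma IsSimple.abs_sum_sub_le_of_mem_typicalNodes (hA : IsSimple A)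
    (hP : ∀ u v, 0 ≤ P u v ∧ P u v ≤ 1) {u : Fin n} (hu : u ∈ typicalNodes P A Δ) :
    |∑ v, (adjMat A - P) u v| ≤ Δ + 1 := by
  have hdeg := abs_lt.1 (mem_typicalNodes.1 hu)
  rw [hA.sub_eq_centered_sub_diagonal]
  simp only [Matrix.sub_apply, Finset.sum_sub_distrib, Matrix.diagonal_apply, Finset.sum_ite_eq,
    Finset.mem_univ, if_true]
  exact abs_le.2 ⟨by linarith [hP u u], by linarith [hP u u]⟩

lemma IsSimple.norm_restrictM_sub_le (hA : IsSimple A) (hP : ∀ u v, 0 ≤ P u v ∧ P u v ≤ 1)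
    (J : Finset (Fin n)) :
    ‖restrictM (adjMat A - P) J‖ ≤ ‖restrictM (centered P A) J‖ + 1 := by
  have hsplit : restrictM (adjMat A - P) J = restrictM (centered P A) J -
      Matrix.diagonal fun u => if u ∈ J then P u u else 0 := by
    ext u v
    rw [hA.sub_eq_centered_sub_diagonal]
    rcases eq_or_ne u v with rfl | huv
    · by_cases hu : u ∈ J <;> simp [restrictM, hu]
    · simp [restrictM, huv]
  rw [hsplit]
  refine (norm_sub_le _ _).trans (add_le_add_right ?_ _)
  rw [Matrix.l2_opNorm_diagonal, pi_norm_le_iff_of_nonneg zero_le_one]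
  intro u
  split_ifs
  · rw [Real.norm_of_nonneg (hP u u).1]
    exact (hP u u).2
  · simp

lemma sqrt_mul_log_le (hd : 0 ≤ d) : √(d * Real.log d) ≤ d := by
  refine Real.sqrt_le_iff.2 ⟨hd, ?_⟩
  rw [sq]
  exact mul_le_mul_of_nonneg_left (Real.log_le_self hd) hd

lemma one_le_sqrt_mul_log (hd : Real.exp 1 ≤ d) : 1 ≤ √(d * Real.log d) := by
  have hlog : 1 ≤ Real.log d := (Real.le_log_iff_exp_le ((Real.exp_pos 1).trans_le hd)).2 hd
  exact hlog.trans (log_le_sqrt_mul_log hd)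

variable {C τ : ℝ}

lemma IsRegular.norm_restrictM_centered_le (hreg : IsRegular P d C A) (hA : IsSimple A)
    (hsymm : ∀ u v, P u v = P v u) (hP : ∀ u v, 0 ≤ P u v) (hq : ∀ u v, P u v ≤ d / n)
    (hd : Real.exp 1 ≤ d) (hC : 0 ≤ C) :
    ‖restrictM (centered P A) (typicalNodes P A (16 * C * √(d * Real.log d)))‖ ≤
      4 * (4 * (16 * C + 2) + 20 * (32 * C)) * √(d * Real.log d) := by
  have hd0 : 0 ≤ d := (Real.exp_pos 1).le.trans hd
  refine (rectangleBounds_restrictM (hA.isSymm_centered hsymm) hd0 (by positivity) (by positivity)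
    (fun u hu => ?_) hreg.abs_rectSum_le).norm_le hd (by positivity) (by positivity)
  calc ∑ v, |centered P A u v| ≤ 16 * C * √(d * Real.log d) + 2 * d :=
        sum_abs_centered_le_of_mem_typicalNodes hP hq hu
    _ ≤ 16 * C * d + 2 * d := by gcongr; exact sqrt_mul_log_le hd0
    _ = (16 * C + 2) * d := by ring

lemma sum_add_div_card (f : Fin n → ℝ) (τ : ℝ) (u : Fin n) :
    ∑ v, (f v + τ / n) = ∑ v, f v + τ := by
  have : (n : ℝ) ≠ 0 := by exact_mod_cast u.pos.ne'
  rw [Finset.sum_add_distrib, Finset.sum_const, Finset.card_univ, Fintype.card_fin, nsmul_eq_mul,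
    mul_div_cancel₀ _ this]

lemma IsSimple.norm_restrictM_lap_addReg_sub_le (hA : IsSimple A) (hd : 0 ≤ d) (hΔ : 0 ≤ Δ)
    (hτ : 0 < τ) (hP : ∀ u v, 0 ≤ P u v ∧ P u v ≤ 1) (hq : ∀ u v, P u v ≤ d / n) :
    ‖restrictM (lap (addReg A τ) - lap fun u v => P u v + τ / n) (typicalNodes P A Δ)‖ ≤
      (‖restrictM (centered P A) (typicalNodes P A Δ)‖ + 1) / τ +
        (d + τ) * (Δ + 1) / τ ^ 2 := by
  have haVal (u v : Fin n) : 0 ≤ aVal A u v := by unfold aVal; positivity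
  have hτn : 0 ≤ τ / n := by positivity
  let N : Matrix (Fin n) (Fin n) ℝ := fun u v => P u v + τ / n
  have hdiff : addReg A τ - N = adjMat A - P := by
    ext u v
    exact add_sub_add_right_eq_sub _ _ _
  have hM (u : Fin n) : ∑ v, addReg A τ u v = ∑ v, adjMat A u v + τ := sum_add_div_card _ τ u
  have hN (u : Fin n) : ∑ v, N u v = ∑ v, P u v + τ := sum_add_div_card _ τ u
  refine (norm_restrictM_lap_sub_le (N := N) (Δ := Δ + 1) (b := (d + τ) / n) hτ (by positivity)
    (fun u => ?_) (fun u => ?_) (fun u v => ?_) fun u hu => ?_).trans (add_le_add ?_ ?_)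
  · rw [hM]
    exact le_add_of_nonneg_left (Finset.sum_nonneg fun v _ => haVal u v)
  · rw [hN]
    exact le_add_of_nonneg_left (Finset.sum_nonneg fun v _ => (hP u v).1)
  · rw [abs_of_nonneg (add_nonneg (hP u v).1 hτn), add_div]
    exact add_le_add_left (hq u v) _
  · rw [hM, hN, add_sub_add_right_eq_sub, ← Finset.sum_sub_distrib]
    exact hA.abs_sum_sub_le_of_mem_typicalNodes hP hu
  · rw [hdiff]
    gcongr
    exact hA.norm_restrictM_sub_le hP _
  · gcongr
    rcases eq_or_ne (n : ℝ) 0 with hn | hn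
    · rw [hn, zero_mul]; positivity
    · rw [mul_div_cancel₀ _ hn]

theorem IsRegular.norm_restrictM_lap_sub_le (hreg : IsRegular P d C A) (hA : IsSimple A)
    (hsymm : ∀ u v, P u v = P v u) (hP : ∀ u v, 0 ≤ P u v ∧ P u v ≤ 1)
    (hq : ∀ u v, P u v ≤ d / n) (hd : Real.exp 1 ≤ d) (hC : 0 ≤ C) (hτ : 0 < τ) :
    ‖restrictM (lap (addReg A τ) - lap fun u v => P u v + τ / n)
        (typicalNodes P A (16 * C * √(d * Real.log d)))‖ ≤
      (2832 * C + 34) * (√(d * Real.log d) * (d + τ) / τ ^ 2) := by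
  have hd0 : 0 ≤ d := (Real.exp_pos 1).le.trans hd
  have hcentered := hreg.norm_restrictM_centered_le hA hsymm (fun u v => (hP u v).1) hq hd hC
  have hone := one_le_sqrt_mul_log hd
  refine (hA.norm_restrictM_lap_addReg_sub_le hd0 (by positivity) hτ hP hq).trans ?_
  set s := √(d * Real.log d)
  calc (‖restrictM (centered P A) (typicalNodes P A (16 * C * s))‖ + 1) / τ +
        (d + τ) * (16 * C * s + 1) / τ ^ 2
      ≤ (2816 * C + 33) * s / τ + (d + τ) * ((16 * C + 1) * s) / τ ^ 2 := by
        gcongr <;> linarith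
    _ = (2816 * C + 33) * (s * τ / τ ^ 2) + (16 * C + 1) * (s * (d + τ) / τ ^ 2) := by
        field_simp
    _ ≤ (2816 * C + 33) * (s * (d + τ) / τ ^ 2) + (16 * C + 1) * (s * (d + τ) / τ ^ 2) := by
        gcongr
        exact le_add_of_nonneg_left hd0
    _ = (2832 * C + 34) * (s * (d + τ) / τ ^ 2) := by ring

end TypicalNodes

section MaximalEntry

variable {n : ℕ} {P : Matrix (Fin n) (Fin n) ℝ}

lemma le_pmax (P : Matrix (Fin n) (Fin n) ℝ) (u v : Fin n) : P u v ≤ pmax P := by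
  have hrange : {x : ℝ | ∃ u v, x = P u v} = Set.range fun p : Fin n × Fin n => P p.1 p.2 := by
    ext x
    simp [eq_comm]
  exact le_csSup (hrange ▸ (Set.finite_range _).bddAbove) ⟨u, v, rfl⟩

lemma exp_one_le_exp_one_mul (hP : ∀ u v, 0 ≤ P u v) :
    Real.exp 1 ≤ Real.exp 1 * (n * pmax P + 1) := by
  have hpmax : 0 ≤ pmax P := Real.sSup_nonneg (by rintro _ ⟨u, v, rfl⟩; exact hP u v)
  exact le_mul_of_one_le_right (Real.exp_pos 1).le (le_add_of_nonneg_left (by positivity))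

lemma le_exp_one_mul_div (hP : ∀ u v, 0 ≤ P u v) (u v : Fin n) :
    P u v ≤ Real.exp 1 * (n * pmax P + 1) / n := by
  have hn : (0 : ℝ) < n := by exact_mod_cast u.pos
  have hpmax : 0 ≤ pmax P := (hP u v).trans (le_pmax P u v)
  rw [le_div_iff₀ hn, mul_comm]
  calc n * P u v ≤ n * pmax P + 1 := by linarith [mul_le_mul_of_nonneg_left (le_pmax P u v) hn.le]
    _ ≤ Real.exp 1 * (n * pmax P + 1) :=
        le_mul_of_one_le_left (by positivity) (Real.one_le_exp zero_le_one)

end MaximalEntry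

/-- Lemma 10 (Laplacian concentration on a large subset of nodes). -/
theorem statement_19 (C' : ℝ) (hC' : 0 < C') :
    ∃ C : ℝ, 0 < C ∧
      ∀ (n : ℕ) (P : Matrix (Fin n) (Fin n) ℝ) (τ : ℝ), 0 < τ →
        (∀ u v, P u v = P v u) → (∀ u v, 0 ≤ P u v ∧ P u v ≤ 1) →
        1 - (n : ℝ) ^ (-C') ≤ prob P
          { A | ∃ J : Finset (Fin n),
              (n : ℝ) - J.card ≤
                (n : ℝ) / (Real.exp 1 * ((n : ℝ) * pmax P + 1)) ∧
              opNorm (restrictM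
                  (lap (addReg A τ) - lap (fun u v => P u v + τ / n)) J) ≤
                C * (Real.sqrt ((Real.exp 1 * ((n : ℝ) * pmax P + 1)) *
                      Real.log (Real.exp 1 * ((n : ℝ) * pmax P + 1))) *
                    ((Real.exp 1 * ((n : ℝ) * pmax P + 1)) + τ) / τ ^ 2 +
                  Real.sqrt (Real.exp 1 * ((n : ℝ) * pmax P + 1)) / τ) } := by
  have hC : 0 ≤ C' + 4 := by linarith
  refine ⟨2832 * (C' + 4) + 34, by positivity, fun n P τ hτ hsymm hP => ?_⟩
  have hd := exp_one_le_exp_one_mul fun u v => (hP u v).1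
  have hq := le_exp_one_mul_div fun u v => (hP u v).1
  generalize Real.exp 1 * ((n : ℝ) * pmax P + 1) = d at hd hq ⊢
  refine (one_sub_rpow_le_prob_isRegular hsymm hP hd hq hC'.le).trans
    (prob_mono_of_isSimple hP fun A hA hreg => ⟨_, sub_card_typicalNodes_le
      ((Real.exp_pos 1).trans_le hd) hreg.abs_rectSum_univ_lt, (opNorm_le_norm _).trans
      ((hreg.norm_restrictM_lap_sub_le hA hsymm hP hq hd hC hτ).trans ?_)⟩)
  gcongr
  exact le_add_of_nonneg_right (by positivity)

end SBM
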